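/- arXiv:1710.03284 — 3 statements merged into one kernel-verified Lean document; each statement's English description precedes it below -/
import Mathlib

section
/- Let 1 ≤ N < L be integers and let z, z′ be nonzero complex numbers with z^L ≠ (z′)^L. Let w_1,…,w_N ∈ ℂ satisfy w_j^N (w_j+1)^{L−N} = z^L for every j, and let w′_1,…,w′_N ∈ ℂ satisfy (w′_j)^N (w′_j+1)^{L−N} = (z′)^L for every j (so automatically all w_j, w′_j ∉ {0,−1} and w_i ≠ w′_{i′} for all i,i′). Then for every integer a, the finite sum H_a(W;W′) := ∑_{X ∈ 𝒳_N(L), x_1 = a} R_X(W)·L_X(W′) equals −((z′/z)^L − 1)^{N−1} · ( ∏_{j=1}^N [w′_j (w′_j+1)^{a−1}] / [w_j (w_j+1)^{a−2}] − ∏_{j=1}^N [w′_j (w′_j+1)^{a}] / [w_j (w_j+1)^{a−1}] ) · det[ 1/(w′_{i′} − w_i) ]_{i,i′=1}^N, where rows of the determinant are indexed by i and columns by i′. -/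
open scoped BigOperators

/-- The configuration space `𝒳_N(L)`: strictly increasing `N`-tuples of integers
whose entries all lie within a window of length `L` (equivalently,
`x_1 < x_2 < ⋯ < x_N < x_1 + L`). -/
def XNL (N L : ℕ) : Set (Fin N → ℤ) :=
  {X | StrictMono X ∧ ∀ i j, X i < X j + (L : ℤ)}

/-- `L_X(W) = det[w_i^j (w_i+1)^{x_j - j}]_{i,j=1}^N` (1-based indices, integer powers). -/
noncomputable def LXdet {N : ℕ} (X : Fin N → ℤ) (w : Fin N → ℂ) : ℂ :=
  Matrix.det (Matrix.of fun i j : Fin N =>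
    w i ^ (((j : ℕ) : ℤ) + 1) * (w i + 1) ^ (X j - (((j : ℕ) : ℤ) + 1)))

/-- `R_X(W) = det[w_i^{-j} (w_i+1)^{-x_j + j}]_{i,j=1}^N` (1-based indices, integer powers). -/
noncomputable def RXdet {N : ℕ} (X : Fin N → ℤ) (w : Fin N → ℂ) : ℂ :=
  Matrix.det (Matrix.of fun i j : Fin N =>
    w i ^ (-(((j : ℕ) : ℤ) + 1)) * (w i + 1) ^ (-(X j) + (((j : ℕ) : ℤ) + 1)))

open scoped TensorProduct IsMulCommutative

theorem prod_ofFn_tmul {R A B : Type*} [CommRing R] [Ring A] [Algebra R A] [Ring B] [Algebra R B]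
    {n : ℕ} (a : Fin n → A) (b : Fin n → B) :
    (List.ofFn fun i => a i ⊗ₜ[R] b i).prod = (List.ofFn a).prod ⊗ₜ[R] (List.ofFn b).prod := by
  induction n with
  | zero => simp [Algebra.TensorProduct.one_def]
  | succ n ih => simp [List.ofFn_succ, ih]

/-- A commutative algebra generated by rank-one tensors `g u v`, with a linear functional
sending a product of `n` rank-one tensors to the product of the two determinants. -/
theorem exists_mixed_determinant (n : ℕ) :
    ∃ (A : Type) (_ : CommRing A) (_ : Algebra ℂ A)
      (g : (Fin n → ℂ) →ₗ[ℂ] (Fin n → ℂ) →ₗ[ℂ] A) (ε : A →ₗ[ℂ] ℂ),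
      (∀ u u' v, g u v * g u' v = 0) ∧
      ∀ U V : Fin n → Fin n → ℂ,
        ε (∏ i, g (U i) (V i)) = (Matrix.of U).det * (Matrix.of V).det := by
  let E := ExteriorAlgebra ℂ (Fin n → ℂ)
  let s : Set (E ⊗[ℂ] E) :=
    Set.range fun p : (Fin n → ℂ) × (Fin n → ℂ) =>
      ExteriorAlgebra.ι ℂ p.1 ⊗ₜ[ℂ] ExteriorAlgebra.ι ℂ p.2
  have hswap : ∀ x y : Fin n → ℂ, (ExteriorAlgebra.ι ℂ x * ExteriorAlgebra.ι ℂ y : E) =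
      -(ExteriorAlgebra.ι ℂ y * ExteriorAlgebra.ι ℂ x) := fun x y =>
    eq_neg_of_add_eq_zero_left (ExteriorAlgebra.ι_add_mul_swap x y)
  have hcomm : ∀ a ∈ s, ∀ b ∈ s, a * b = b * a := by
    rintro _ ⟨p, rfl⟩ _ ⟨r, rfl⟩
    simp only [Algebra.TensorProduct.tmul_mul_tmul]
    rw [hswap p.1, hswap p.2, TensorProduct.neg_tmul, TensorProduct.tmul_neg, neg_neg]
  have := Algebra.isMulCommutative_adjoin ℂ hcomm
  let ev : E →ₗ[ℂ] ℂ := ExteriorAlgebra.liftAlternating fun i =>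
    if h : i = n then h ▸ Matrix.detRowAlternating else 0
  have hev : ∀ U : Fin n → Fin n → ℂ,
      ev (List.ofFn fun i => ExteriorAlgebra.ι ℂ (U i)).prod = (Matrix.of U).det := by
    intro U
    rw [← ExteriorAlgebra.ιMulti_apply, ExteriorAlgebra.liftAlternating_apply_ιMulti]
    simp
    rfl
  let ε : E ⊗[ℂ] E →ₗ[ℂ] ℂ := LinearMap.mul' ℂ ℂ ∘ₗ TensorProduct.map ev ev
  let g : (Fin n → ℂ) →ₗ[ℂ] (Fin n → ℂ) →ₗ[ℂ] Algebra.adjoin ℂ s :=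
    LinearMap.mk₂ ℂ
      (fun u v => ⟨ExteriorAlgebra.ι ℂ u ⊗ₜ[ℂ] ExteriorAlgebra.ι ℂ v,
        Algebra.subset_adjoin ⟨(u, v), rfl⟩⟩)
      (fun u u' v => Subtype.ext (by simp [TensorProduct.add_tmul]))
      (fun c u v => Subtype.ext (by simp [TensorProduct.smul_tmul']))
      (fun u v v' => Subtype.ext (by simp [TensorProduct.tmul_add]))
      (fun c u v => Subtype.ext (by simp))
  refine ⟨Algebra.adjoin ℂ s, inferInstance, inferInstance, g,
    ε ∘ₗ (Algebra.adjoin ℂ s).val.toLinearMap, ?_, ?_⟩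
  · intro u u' v
    apply Subtype.ext
    change (ExteriorAlgebra.ι ℂ u ⊗ₜ[ℂ] ExteriorAlgebra.ι ℂ v) *
      (ExteriorAlgebra.ι ℂ u' ⊗ₜ[ℂ] ExteriorAlgebra.ι ℂ v) = (0 : E ⊗[ℂ] E)
    simp
  · intro U V
    have : (Algebra.adjoin ℂ s).val (∏ i, g (U i) (V i)) =
        (List.ofFn fun i => ExteriorAlgebra.ι ℂ (U i) ⊗ₜ[ℂ] ExteriorAlgebra.ι ℂ (V i)).prod := by
      rw [← List.prod_ofFn, map_list_prod, List.map_ofFn]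
      rfl
    change ε ((Algebra.adjoin ℂ s).val (∏ i, g (U i) (V i))) = _
    rw [this, prod_ofFn_tmul]
    simp [ε, hev]

theorem add_pow_succ_of_sq_eq_zero {A : Type*} [CommRing A] (x q : A) (hq : q * q = 0) (n : ℕ) :
    (x + q) ^ (n + 1) = x ^ (n + 1) + (n + 1) * (q * x ^ n) := by
  induction n with
  | zero => simp
  | succ n ih =>
    rw [pow_succ, ih]
    push_cast
    linear_combination ((n : A) + 1) * x ^ n * hq

theorem mul_add_pow_of_mul_eq_zero {A : Type*} [CommRing A] (q x y : A) (h : q * y = 0) (n : ℕ) :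
    q * (x + y) ^ n = q * x ^ n := by
  induction n with
  | zero => simp
  | succ n ih =>
    rw [pow_succ, ← mul_assoc, ih]
    linear_combination x ^ n * h

theorem sum_range_pow_succ_eq_zero {A : Type*} [CommRing A] (e : ℕ → A)
    (he : ∀ i, e i * e i = 0) (m : ℕ) : (∑ i ∈ Finset.range m, e i) ^ (m + 1) = 0 := by
  induction m with
  | zero => simp
  | succ m ih =>
    rw [Finset.sum_range_succ, add_pow_succ_of_sq_eq_zero _ _ (he m), pow_succ, ih]
    simp

theorem sum_Ioo_int_sub {A : Type*} [AddCommGroup A] (F : ℤ → A) {p B : ℤ} (h : p < B) :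
    ∑ x ∈ Finset.Ioo p B, (F (x - 1) - F x) = F p - F (B - 1) := by
  have h' : p + 1 ≤ B := h
  induction B, h' using Int.leInduction with
  | base =>
    have : Finset.Ioo p (p + 1) = ∅ := by
      ext x
      simp
    simp [this]
  | succ B hB ih =>
    have hins : Finset.Ioo p (B + 1) = insert B (Finset.Ioo p B) := by
      ext x
      simp only [Finset.mem_insert, Finset.mem_Ioo]
      omega
    rw [hins, Finset.sum_insert (by simp), ih (by omega)]
    simp

/-- The sum of `∏ j, q (k + j) (x j)` over chains `p < x 0 < ⋯ < x (m - 1) < B`. -/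
noncomputable def chainSum {A : Type*} [CommRing A] (q : ℕ → ℤ → A) (B : ℤ) : ℕ → ℕ → ℤ → A
  | 0, _, _ => 1
  | m + 1, k, p => ∑ x ∈ Finset.Ioo p B, q k x * chainSum q B m (k + 1) x

/-- The increasing `m`-tuples of integers in the open interval `(p, B)`. -/
noncomputable def increasingTuples (m : ℕ) (p B : ℤ) : Finset (Fin m → ℤ) :=
  {X ∈ Fintype.piFinset fun _ => Finset.Ioo p B | ∀ i j, i < j → X i < X j}

theorem mem_increasingTuples {m : ℕ} {p B : ℤ} {X : Fin m → ℤ} :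
    X ∈ increasingTuples m p B ↔ (∀ i, p < X i ∧ X i < B) ∧ StrictMono X := by
  simp [increasingTuples, StrictMono]

theorem sum_increasingTuples_prod {A : Type*} [CommRing A] (q : ℕ → ℤ → A) (B : ℤ) (m k : ℕ)
    (p : ℤ) :
    ∑ X ∈ increasingTuples m p B, ∏ j : Fin m, q (k + j) (X j) = chainSum q B m k p := by
  induction m generalizing k p with
  | zero =>
    have : increasingTuples 0 p B = Finset.univ := by
      ext X
      simp [mem_increasingTuples, StrictMono, eq_iff_true_of_subsingleton]
    simp [this, chainSum]
  | succ m ih =>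
    simp only [chainSum, ← ih, Finset.mul_sum]
    rw [Finset.sum_sigma']
    refine Finset.sum_bij' (fun X _ => ⟨X 0, Fin.tail X⟩) (fun Y _ => Fin.cons Y.1 Y.2)
      ?_ ?_ ?_ ?_ ?_
    · intro X hX
      rw [mem_increasingTuples] at hX
      simp only [Finset.mem_sigma, Finset.mem_Ioo, mem_increasingTuples]
      exact ⟨hX.1 0, fun i => ⟨hX.2 (Fin.succ_pos i), (hX.1 _).2⟩,
        hX.2.comp (Fin.strictMono_succ)⟩
    · rintro ⟨x, Y⟩ hY
      simp only [Finset.mem_sigma, Finset.mem_Ioo, mem_increasingTuples] at hY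
      obtain ⟨hx, hY, hmono⟩ := hY
      rw [mem_increasingTuples, Fin.strictMono_cons, Fin.forall_fin_succ]
      simp only [Fin.cons_zero, Fin.cons_succ]
      exact ⟨⟨hx, fun i => ⟨hx.1.trans (hY i).1, (hY i).2⟩⟩, fun i => (hY i).1, hmono⟩
    · intro X _
      exact Fin.cons_self_tail X
    · rintro ⟨x, Y⟩ _
      simp
    · intro X _
      rw [Fin.prod_univ_succ]
      simp [Fin.tail, add_assoc, add_comm 1]

section Chain

variable {A U V : Type*} [CommRing A] [Algebra ℂ A] [AddCommGroup U] [Module ℂ U]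
  [AddCommGroup V] [Module ℂ V] (g : U →ₗ[ℂ] V →ₗ[ℂ] A) (u : ℕ → ℤ → U) (v : ℕ → ℤ → V)

/-- The one-level tensor sum, with boundary terms at `B`, whose powers compute chain sums. -/
noncomputable def levelSum (B : ℤ) (m k : ℕ) (p : ℤ) : A :=
  ∑ y ∈ Finset.Ioo p B, g (u k y) (v k y) +
    ∑ i ∈ Finset.range m, g (u (k + i + 1) B) (v (k + i) (B - 1))

theorem levelSum_succ (hu : ∀ k x, u k x = u (k + 1) x - u (k + 1) (x + 1))
    (hv : ∀ k x, v (k + 1) x = v k x - v k (x - 1)) {B p : ℤ} (hp : p < B) (m k : ℕ) :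
    levelSum g u v B m (k + 1) p =
      levelSum g u v B (m + 1) k p + -g (u (k + 1) (p + 1)) (v k p) := by
  have hparts : ∑ y ∈ Finset.Ioo p B, g (u k y) (v k y) -
      ∑ y ∈ Finset.Ioo p B, g (u (k + 1) y) (v (k + 1) y) =
      g (u (k + 1) (p + 1)) (v k p) - g (u (k + 1) B) (v k (B - 1)) := by
    have h := sum_Ioo_int_sub (fun x => g (u (k + 1) (x + 1)) (v k x)) hp
    simp only [sub_add_cancel] at h
    rw [← h, ← Finset.sum_sub_distrib]
    refine Finset.sum_congr rfl fun y _ => ?_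
    rw [hu k y, hv k y]
    simp only [map_sub, LinearMap.sub_apply]
    abel
  have hb : ∑ i ∈ Finset.range m, g (u (k + (i + 1) + 1) B) (v (k + (i + 1)) (B - 1)) =
      ∑ i ∈ Finset.range m, g (u (k + 1 + i + 1) B) (v (k + 1 + i) (B - 1)) := by
    refine Finset.sum_congr rfl fun i _ => ?_
    rw [show k + (i + 1) = k + 1 + i by ring]
  rw [levelSum, levelSum, Finset.sum_range_succ', hb]
  simp only [add_zero]
  linear_combination -hparts

theorem levelSum_pred {B p : ℤ} (hp : p < B) (m k : ℕ) :
    levelSum g u v B m k (p - 1) = levelSum g u v B m k p + g (u k p) (v k p) := by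
  have hins : Finset.Ioo (p - 1) B = insert p (Finset.Ioo p B) := by
    ext x
    simp only [Finset.mem_insert, Finset.mem_Ioo]
    omega
  rw [levelSum, levelSum, hins, Finset.sum_insert (by simp)]
  ring

theorem mul_levelSum_succ_pow (hg : ∀ x x' y, g x y * g x' y = 0)
    (hu : ∀ k x, u k x = u (k + 1) x - u (k + 1) (x + 1))
    (hv : ∀ k x, v (k + 1) x = v k x - v k (x - 1)) {B p : ℤ} (hp : p < B) (m k : ℕ) :
    g (u k p) (v k p) * levelSum g u v B (m - 1) (k + 1) p ^ m =
      g (u k p) (v k p) * levelSum g u v B m k p ^ m := by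
  cases m with
  | zero => simp
  | succ m =>
    rw [Nat.add_sub_cancel, levelSum_succ g u v hu hv hp, mul_add_pow_of_mul_eq_zero]
    rw [mul_neg, hg, neg_zero]

theorem factorial_mul_chainSum (hg : ∀ x x' y, g x y * g x' y = 0)
    (hu : ∀ k x, u k x = u (k + 1) x - u (k + 1) (x + 1))
    (hv : ∀ k x, v (k + 1) x = v k x - v k (x - 1)) (B : ℤ) (m k : ℕ) (p : ℤ) (hp : p < B) :
    (m.factorial : A) * chainSum (fun k x => g (u k x) (v k x)) B m k p =
      levelSum g u v B (m - 1) k p ^ m := by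
  induction m generalizing k p with
  | zero => simp [chainSum]
  | succ m ih =>
    have hterm : ∀ x ∈ Finset.Ioo p B,
        ((m + 1).factorial : A) * (g (u k x) (v k x) *
          chainSum (fun k x => g (u k x) (v k x)) B m (k + 1) x) =
        levelSum g u v B m k (x - 1) ^ (m + 1) - levelSum g u v B m k x ^ (m + 1) := by
      intro x hx
      have hx := (Finset.mem_Ioo.1 hx).2
      rw [levelSum_pred g u v hx, add_pow_succ_of_sq_eq_zero _ _ (hg _ _ _),
        ← mul_levelSum_succ_pow g u v hg hu hv hx, ← ih (k + 1) x hx, Nat.factorial_succ]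
      push_cast
      ring
    have hlast : levelSum g u v B m k (B - 1) ^ (m + 1) = 0 := by
      have : Finset.Ioo (B - 1) B = ∅ := by
        ext x
        simp
      rw [levelSum, this, Finset.sum_empty, zero_add]
      exact sum_range_pow_succ_eq_zero (fun i => g (u (k + i + 1) B) (v (k + i) (B - 1)))
        (fun i => hg _ _ _) m
    rw [chainSum, Finset.mul_sum, Finset.sum_congr rfl hterm,
      sum_Ioo_int_sub (fun x => levelSum g u v B m k x ^ (m + 1)) hp, hlast, sub_zero,
      Nat.add_sub_cancel]

/-- The chain sum with first entry fixed, as a difference of two powers. -/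
theorem factorial_mul_mul_chainSum (hg : ∀ x x' y, g x y * g x' y = 0)
    (hu : ∀ k x, u k x = u (k + 1) x - u (k + 1) (x + 1))
    (hv : ∀ k x, v (k + 1) x = v k x - v k (x - 1)) (B : ℤ) (m k : ℕ) (p : ℤ) (hp : p < B) :
    ((m + 1).factorial : A) * (g (u k p) (v k p) *
      chainSum (fun k x => g (u k x) (v k x)) B m (k + 1) p) =
      levelSum g u v B m k (p - 1) ^ (m + 1) - levelSum g u v B m k p ^ (m + 1) := by
  rw [levelSum_pred g u v hp, add_pow_succ_of_sq_eq_zero _ _ (hg _ _ _),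
    ← mul_levelSum_succ_pow g u v hg hu hv hp,
    ← factorial_mul_chainSum g u v hg hu hv B m (k + 1) p hp, Nat.factorial_succ]
  push_cast
  ring

end Chain

section MixedDeterminant

variable {A : Type*} [CommRing A] [Algebra ℂ A] {n : ℕ}

/-- The linear extension to matrices of a bilinear map defined on pairs of vectors. -/
noncomputable def tensorOfMatrix (g : (Fin n → ℂ) →ₗ[ℂ] (Fin n → ℂ) →ₗ[ℂ] A) :
    Matrix (Fin n) (Fin n) ℂ →ₗ[ℂ] A where
  toFun M := ∑ i, g (Pi.single i 1) (M i)
  map_add' M M' := by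
    rw [← Finset.sum_add_distrib]
    exact Finset.sum_congr rfl fun i _ => map_add _ (M i) (M' i)
  map_smul' c M := by
    rw [RingHom.id_apply, Finset.smul_sum]
    exact Finset.sum_congr rfl fun i _ => map_smul _ c (M i)

theorem tensorOfMatrix_vecMulVec (g : (Fin n → ℂ) →ₗ[ℂ] (Fin n → ℂ) →ₗ[ℂ] A)
    (u v : Fin n → ℂ) : tensorOfMatrix g (Matrix.vecMulVec u v) = g u v := by
  change ∑ i, g (Pi.single i 1) (Matrix.vecMulVec u v i) = g u v
  conv_rhs => rw [pi_eq_sum_univ' u]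
  simp only [map_sum, LinearMap.sum_apply, map_smul, LinearMap.smul_apply]
  refine Finset.sum_congr rfl fun i _ => ?_
  have : Matrix.vecMulVec u v i = u i • v := by
    ext j
    simp [Matrix.vecMulVec_apply]
  rw [this, map_smul]

theorem map_tensorOfMatrix_pow (g : (Fin n → ℂ) →ₗ[ℂ] (Fin n → ℂ) →ₗ[ℂ] A) (ε : A →ₗ[ℂ] ℂ)
    (hε : ∀ U V : Fin n → Fin n → ℂ,
      ε (∏ i, g (U i) (V i)) = (Matrix.of U).det * (Matrix.of V).det)
    (M : Matrix (Fin n) (Fin n) ℂ) :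
    ε (tensorOfMatrix g M ^ n) = n.factorial * M.det := by
  have hpow : tensorOfMatrix g M ^ n =
      ∑ f : Fin n → Fin n, ∏ i, g (Pi.single (f i) 1) (M (f i)) :=
    Fintype.sum_pow (fun i => g (Pi.single i 1) (M i)) n
  rw [hpow, map_sum]
  simp only [hε]
  have hinj : ∀ f : Fin n → Fin n, ¬ Function.Bijective f →
      (Matrix.of fun i => Pi.single (f i) (1 : ℂ)).det * (Matrix.of fun i => M (f i)).det = 0 := by
    intro f hf
    have : ¬ Function.Injective f := fun h => hf (Finite.injective_iff_bijective.1 h)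
    simp only [Function.Injective, not_forall] at this
    obtain ⟨i, j, hij, hne⟩ := this
    rw [Matrix.det_zero_of_row_eq (M := Matrix.of fun i => M (f i)) hne (by ext; simp [hij]),
      mul_zero]
  have hperm : ∀ σ : Equiv.Perm (Fin n),
      (Matrix.of fun i => Pi.single (σ i) (1 : ℂ)).det * (Matrix.of fun i => M (σ i)).det =
        M.det := by
    intro σ
    have h1 : (Matrix.of fun i => Pi.single (σ i) (1 : ℂ)) =
        (1 : Matrix (Fin n) (Fin n) ℂ).submatrix σ id := by
      ext i j
      simp [Matrix.one_apply, Pi.single_apply, eq_comm]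
    have h2 : (Matrix.of fun i => M (σ i)) = M.submatrix σ id := rfl
    rw [h1, h2, Matrix.det_permute, Matrix.det_permute, Matrix.det_one, mul_one, ← mul_assoc,
      ← Int.cast_mul]
    simp
  rw [← Finset.sum_subset (Finset.subset_univ
      (Finset.univ.map ⟨fun σ : Equiv.Perm (Fin n) => (σ : Fin n → Fin n), DFunLike.coe_injective⟩))]
  · rw [Finset.sum_map]
    simp [hperm, Fintype.card_perm]
  · intro f _ hf
    refine hinj f fun hb => hf ?_
    simp only [Finset.mem_map, Finset.mem_univ, true_and]
    exact ⟨Equiv.ofBijective f hb, rfl⟩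

end MixedDeterminant

theorem det_smul_add_smul_vecMulVec {n : ℕ} (M : Matrix (Fin (n + 1)) (Fin (n + 1)) ℂ)
    (α β : Fin (n + 1) → ℂ) (c t : ℂ) :
    (c • M + t • Matrix.vecMulVec α β).det =
      c ^ (n + 1) * M.det + c ^ n * t * ((M + Matrix.vecMulVec α β).det - M.det) := by
  obtain ⟨A, _, _, g, ε, hg, hε⟩ := exists_mixed_determinant (n + 1)
  have key : ∀ c t : ℂ, ((n + 1).factorial : ℂ) * (c • M + t • Matrix.vecMulVec α β).det =
      c ^ (n + 1) * ((n + 1).factorial * M.det) +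
        c ^ n * t * ε ((n + 1) * (g α β * tensorOfMatrix g M ^ n)) := by
    intro c t
    rw [← map_tensorOfMatrix_pow g ε hε, ← map_tensorOfMatrix_pow g ε hε, map_add, map_smul,
      map_smul, tensorOfMatrix_vecMulVec, add_pow_succ_of_sq_eq_zero _ _ (by simp [hg]), map_add,
      smul_pow, map_smul, smul_eq_mul, smul_pow, ← smul_eq_mul (c ^ n * t), ← ε.map_smul]
    congr 2
    simp only [Algebra.smul_def, map_mul, map_pow]
    ring
  have hn : ((n + 1).factorial : ℂ) ≠ 0 := by exact_mod_cast Nat.factorial_ne_zero _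
  have h1 := key 1 1
  simp only [one_smul, one_pow, one_mul] at h1
  apply mul_left_cancel₀ hn
  linear_combination key c t - c ^ n * t * h1

theorem sum_det_mul_det {n : ℕ} (u v : ℕ → ℤ → Fin (n + 1) → ℂ)
    (hu : ∀ k x, u k x = u (k + 1) x - u (k + 1) (x + 1))
    (hv : ∀ k x, v (k + 1) x = v k x - v k (x - 1)) {a B : ℤ} (ha : a < B)
    (K : ℤ → Matrix (Fin (n + 1)) (Fin (n + 1)) ℂ)
    (hK : ∀ p, K p = ∑ y ∈ Finset.Ioo p B, Matrix.vecMulVec (u 0 y) (v 0 y) +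
      ∑ i ∈ Finset.range n, Matrix.vecMulVec (u (i + 1) B) (v i (B - 1))) :
    ∑ Y ∈ increasingTuples n a B,
      (Matrix.of fun j : Fin (n + 1) => u j ((Fin.cons a Y : Fin (n + 1) → ℤ) j)).det *
      (Matrix.of fun j : Fin (n + 1) => v j ((Fin.cons a Y : Fin (n + 1) → ℤ) j)).det =
      (K (a - 1)).det - (K a).det := by
  obtain ⟨A, _, _, g, ε, hg, hε⟩ := exists_mixed_determinant (n + 1)
  have hlevel : ∀ p, levelSum g u v B n 0 p = tensorOfMatrix g (K p) := by
    intro p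
    simp [hK, levelSum, tensorOfMatrix_vecMulVec]
  have hchain := factorial_mul_mul_chainSum g u v hg hu hv B n 0 a ha
  have hn : ((n + 1).factorial : ℂ) ≠ 0 := by exact_mod_cast Nat.factorial_ne_zero _
  apply mul_left_cancel₀ hn
  rw [mul_sub, ← map_tensorOfMatrix_pow g ε hε, ← map_tensorOfMatrix_pow g ε hε, ← map_sub,
    ← hlevel, ← hlevel, ← hchain, ← sum_increasingTuples_prod, ← nsmul_eq_mul, ← nsmul_eq_mul,
    map_nsmul, Finset.mul_sum, map_sum]
  congr 1
  refine Finset.sum_congr rfl fun Y _ => ?_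
  rw [← hε, Fin.prod_univ_succ]
  simp [add_comm]

theorem det_sub_mul_cauchy {n : ℕ} (C : Matrix (Fin (n + 1)) (Fin (n + 1)) ℂ)
    (r s α β : Fin (n + 1) → ℂ) (ρ : ℂ)
    (h : ∀ i j, r i * s j * C i j = C i j + α i * β j) :
    (Matrix.of fun i j => (ρ - r i * s j) * C i j).det =
      (ρ - 1) ^ (n + 1) * C.det - (ρ - 1) ^ n * ((∏ i, r i) * (∏ j, s j) - 1) * C.det := by
  have hM : (Matrix.of fun i j => (ρ - r i * s j) * C i j) =
      (ρ - 1) • C + (-1 : ℂ) • Matrix.vecMulVec α β := by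
    ext i j
    simp [Matrix.vecMulVec_apply]
    linear_combination -h i j
  have hM' : C + Matrix.vecMulVec α β =
      Matrix.of fun i j => r i * (Matrix.of fun i j => s j * C i j) i j := by
    ext i j
    simp [Matrix.vecMulVec_apply]
    linear_combination -h i j
  rw [hM, det_smul_add_smul_vecMulVec, hM', Matrix.det_mul_column, Matrix.det_mul_row]
  ring

theorem tsum_XNL_eq_sum {n L : ℕ} (hL : 0 < L) (a : ℤ) (f : (Fin (n + 1) → ℤ) → ℂ) :
    (∑' X : {X : Fin (n + 1) → ℤ // X ∈ XNL (n + 1) L ∧ X 0 = a}, f X.1) =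
      ∑ Y ∈ increasingTuples n a (a + L), f (Fin.cons a Y) := by
  classical
  have hmem : ∀ X : Fin (n + 1) → ℤ, (X ∈ XNL (n + 1) L ∧ X 0 = a) ↔
      X ∈ (increasingTuples n a (a + L)).image fun Y => (Fin.cons a Y : Fin (n + 1) → ℤ) := by
    intro X
    simp only [Finset.mem_image, mem_increasingTuples, XNL, Set.mem_ofPred_eq]
    constructor
    · rintro ⟨⟨hmono, hlt⟩, rfl⟩
      exact ⟨Fin.tail X, ⟨fun i => ⟨hmono (Fin.succ_pos i), hlt _ _⟩,
        hmono.comp Fin.strictMono_succ⟩, Fin.cons_self_tail X⟩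
    · rintro ⟨Y, ⟨hY, hmono⟩, rfl⟩
      refine ⟨⟨Fin.strictMono_cons.2 ⟨fun i => (hY i).1, hmono⟩, ?_⟩, rfl⟩
      have hrange : ∀ i, a ≤ (Fin.cons a Y : Fin (n + 1) → ℤ) i ∧
          (Fin.cons a Y : Fin (n + 1) → ℤ) i < a + L := by
        rw [Fin.forall_fin_succ]
        simp only [Fin.cons_zero, Fin.cons_succ]
        exact ⟨⟨le_rfl, by omega⟩, fun i => ⟨(hY i).1.le, (hY i).2⟩⟩
      intro i j
      linarith [(hrange i).2, (hrange j).1]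
  rw [← (Equiv.subtypeEquivRight hmem).symm.tsum_eq]
  exact (Finset.tsum_subtype _ f).trans
    (Finset.sum_image fun Y _ Y' _ h => Fin.cons_right_injective _ h)

/-- The entries of the one-level matrix, in closed form: both sums telescope against `y - x`. -/
theorem mul_levelMatrix_entry (x y : ℂ) (hx : x ≠ 0) (hx1 : x + 1 ≠ 0) (hy : y ≠ 0)
    (hy1 : y + 1 ≠ 0) (n : ℕ) {p B : ℤ} (hp : p < B) :
    (y - x) * (∑ b ∈ Finset.Ioo p B,
        (x ^ (-1 : ℤ) * (x + 1) ^ (-b + 1)) * (y ^ (1 : ℤ) * (y + 1) ^ (b - 1)) +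
      ∑ i ∈ Finset.range n,
        (x ^ (-((i : ℤ) + 1 + 1)) * (x + 1) ^ (-B + ((i : ℤ) + 1 + 1))) *
          (y ^ ((i : ℤ) + 1) * (y + 1) ^ (B - 1 - ((i : ℤ) + 1)))) =
      (y / x) ^ (n + 1) * ((y + 1) ^ (B - 1 - n) * (x + 1) ^ (-B + n + 2)) -
        y / x * ((y + 1) ^ p * (x + 1) ^ (-p + 1)) := by
  have h1 := sum_Ioo_int_sub (fun b => -(y / x * ((y + 1) ^ b * (x + 1) ^ (-b + 1)))) hp
  have h2 := Finset.sum_range_sub (fun i : ℕ =>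
    (y / x) ^ (i + 1) * ((y + 1) ^ (B - 1 - i) * (x + 1) ^ (-B + i + 2))) n
  rw [mul_add, Finset.mul_sum, Finset.mul_sum]
  have e1 : ∑ b ∈ Finset.Ioo p B, (y - x) *
        ((x ^ (-1 : ℤ) * (x + 1) ^ (-b + 1)) * (y ^ (1 : ℤ) * (y + 1) ^ (b - 1))) =
      ∑ b ∈ Finset.Ioo p B, (-(y / x * ((y + 1) ^ (b - 1) * (x + 1) ^ (-(b - 1) + 1))) -
        -(y / x * ((y + 1) ^ b * (x + 1) ^ (-b + 1)))) := by
    refine Finset.sum_congr rfl fun b _ => ?_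
    rw [show -(b - 1) + 1 = (-b + 1) + 1 by ring, zpow_add_one₀ hx1 (-b + 1),
      show (y + 1) ^ b = (y + 1) ^ (b - 1) * (y + 1) by rw [← zpow_add_one₀ hy1, sub_add_cancel],
      zpow_one, zpow_neg_one]
    field_simp
    ring
  have e2 : ∑ i ∈ Finset.range n, (y - x) *
        ((x ^ (-((i : ℤ) + 1 + 1)) * (x + 1) ^ (-B + ((i : ℤ) + 1 + 1))) *
          (y ^ ((i : ℤ) + 1) * (y + 1) ^ (B - 1 - ((i : ℤ) + 1)))) =
      ∑ i ∈ Finset.range n,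
        ((y / x) ^ (i + 1 + 1) *
            ((y + 1) ^ (B - 1 - ((i + 1 : ℕ) : ℤ)) * (x + 1) ^ (-B + ((i + 1 : ℕ) : ℤ) + 2)) -
          (y / x) ^ (i + 1) * ((y + 1) ^ (B - 1 - i) * (x + 1) ^ (-B + i + 2))) := by
    refine Finset.sum_congr rfl fun i _ => ?_
    have hx2 : (x + 1) ^ (-B + ((i + 1 : ℕ) : ℤ) + 2) = (x + 1) ^ (-B + i + 2) * (x + 1) := by
      rw [← zpow_add_one₀ hx1]
      congr 1
      push_cast
      ring
    have hy2 : (y + 1) ^ (B - 1 - (i : ℤ)) = (y + 1) ^ (B - 1 - ((i : ℤ) + 1)) * (y + 1) := by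
      rw [← zpow_add_one₀ hy1]
      congr 1
      ring
    rw [hx2, hy2, show (-B + ((i : ℤ) + 1 + 1)) = -B + i + 2 by ring,
      show ((i : ℤ) + 1 + 1) = ((i + 2 : ℕ) : ℤ) by push_cast; ring,
      show ((i : ℤ) + 1) = ((i + 1 : ℕ) : ℤ) by push_cast; ring, zpow_neg, zpow_natCast,
      zpow_natCast, div_pow, div_pow]
    field_simp
    ring
  rw [e1, e2, h1, h2]
  simp only [Nat.cast_zero, sub_zero, add_zero, zero_add, pow_one]
  rw [show -(B - 1) + 1 = -B + 2 by ring]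
  ring

/-- `H_a(W;W') = ∑_{X ∈ 𝒳_N(L), x_1 = a} R_X(W) L_X(W')` evaluated in closed form;
the sum is over the finite set of `X ∈ 𝒳_N(L)` with first entry equal to `a`. -/
theorem Ha_eq
    (N L : ℕ) (hN : 1 ≤ N) (hNL : N < L)
    (z z' : ℂ) (hz : z ≠ 0) (hz' : z' ≠ 0) (hzz : z ^ L ≠ z' ^ L)
    (w w' : Fin N → ℂ)
    (hw : ∀ j, w j ^ N * (w j + 1) ^ (L - N) = z ^ L)
    (hw' : ∀ j, w' j ^ N * (w' j + 1) ^ (L - N) = z' ^ L)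
    (a : ℤ) :
    (∑' X : {X : Fin N → ℤ // X ∈ XNL N L ∧ X (⟨0, hN⟩ : Fin N) = a},
        RXdet X.1 w * LXdet X.1 w') =
      -(((z' / z) ^ L - 1) ^ (N - 1)) *
        ((∏ j, (w' j * (w' j + 1) ^ (a - 1)) / (w j * (w j + 1) ^ (a - 2))) -
          ∏ j, (w' j * (w' j + 1) ^ a) / (w j * (w j + 1) ^ (a - 1))) *
        Matrix.det (Matrix.of fun i i' : Fin N => 1 / (w' i' - w i)) := by
  obtain ⟨n, rfl⟩ := Nat.exists_eq_add_of_le' hN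
  have hLN : L - (n + 1) ≠ 0 := by omega
  have ne_of_eq : ∀ {x c : ℂ}, c ≠ 0 → x ^ (n + 1) * (x + 1) ^ (L - (n + 1)) = c ^ L →
      x ≠ 0 ∧ x + 1 ≠ 0 := by
    intro x c hc h
    have hne : x ^ (n + 1) * (x + 1) ^ (L - (n + 1)) ≠ 0 := h ▸ pow_ne_zero L hc
    exact ⟨fun h0 => hne (by simp [h0]), fun h0 => hne (by simp [h0, hLN])⟩
  have hw0 j := (ne_of_eq hz (hw j)).1
  have hw1 j := (ne_of_eq hz (hw j)).2
  have hw0' j := (ne_of_eq hz' (hw' j)).1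
  have hw1' j := (ne_of_eq hz' (hw' j)).2
  have hsub : ∀ i j, w' j - w i ≠ 0 := by
    intro i j h
    rw [sub_eq_zero] at h
    exact hzz (by rw [← hw i, ← hw' j, h])
  set ρ : ℂ := (z' / z) ^ L with hρ
  set C : Matrix (Fin (n + 1)) (Fin (n + 1)) ℂ :=
    Matrix.of fun i i' : Fin (n + 1) => 1 / (w' i' - w i) with hC
  let u : ℕ → ℤ → Fin (n + 1) → ℂ := fun k x i =>
    w i ^ (-((k : ℤ) + 1)) * (w i + 1) ^ (-x + ((k : ℤ) + 1))
  let v : ℕ → ℤ → Fin (n + 1) → ℂ := fun k x i =>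
    w' i ^ ((k : ℤ) + 1) * (w' i + 1) ^ (x - ((k : ℤ) + 1))
  have hu : ∀ k x, u k x = u (k + 1) x - u (k + 1) (x + 1) := by
    intro k x
    ext i
    simp only [u, Pi.sub_apply, Nat.cast_add, Nat.cast_one]
    rw [show -(x + 1) + ((k : ℤ) + 1 + 1) = -x + ((k : ℤ) + 1) by ring,
      show -x + ((k : ℤ) + 1 + 1) = -x + ((k : ℤ) + 1) + 1 by ring, zpow_add_one₀ (hw1 i),
      show -((k : ℤ) + 1) = -((k : ℤ) + 1 + 1) + 1 by ring, zpow_add_one₀ (hw0 i)]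
    ring
  have hv : ∀ k x, v (k + 1) x = v k x - v k (x - 1) := by
    intro k x
    ext i
    simp only [v, Pi.sub_apply, Nat.cast_add, Nat.cast_one]
    rw [zpow_add_one₀ (hw0' i) ((k : ℤ) + 1),
      show x - ((k : ℤ) + 1) = x - ((k : ℤ) + 1 + 1) + 1 by ring, zpow_add_one₀ (hw1' i),
      show x - 1 - ((k : ℤ) + 1) = x - ((k : ℤ) + 1 + 1) by ring]
    ring
  let K : ℤ → Matrix (Fin (n + 1)) (Fin (n + 1)) ℂ := fun p =>
    ∑ y ∈ Finset.Ioo p (a + L), Matrix.vecMulVec (u 0 y) (v 0 y) +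
      ∑ i ∈ Finset.range n, Matrix.vecMulVec (u (i + 1) (a + L)) (v i (a + L - 1))
  have hKentry : ∀ p < a + L, ∀ i j, K p i j =
      (ρ * ((w' j + 1) ^ a * (w i + 1) ^ (-a + 1)) -
        w' j / w i * ((w' j + 1) ^ p * (w i + 1) ^ (-p + 1))) * C i j := by
    intro p hp i j
    have h := mul_levelMatrix_entry (w i) (w' j) (hw0 i) (hw1 i) (hw0' j) (hw1' j) n hp
    have hKij : K p i j = ∑ b ∈ Finset.Ioo p (a + (L : ℤ)),
        (w i ^ (-1 : ℤ) * (w i + 1) ^ (-b + 1)) * (w' j ^ (1 : ℤ) * (w' j + 1) ^ (b - 1)) +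
      ∑ k ∈ Finset.range n,
        (w i ^ (-((k : ℤ) + 1 + 1)) * (w i + 1) ^ (-(a + (L : ℤ)) + ((k : ℤ) + 1 + 1))) *
          (w' j ^ ((k : ℤ) + 1) * (w' j + 1) ^ (a + (L : ℤ) - 1 - ((k : ℤ) + 1))) := by
      simp [K, u, v, Matrix.sum_apply, Matrix.vecMulVec_apply]
    have hbethe : (w' j / w i) ^ (n + 1) *
        ((w' j + 1) ^ (a + (L : ℤ) - 1 - n) * (w i + 1) ^ (-(a + (L : ℤ)) + n + 2)) =
        ρ * ((w' j + 1) ^ a * (w i + 1) ^ (-a + 1)) := by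
      have hcast : ((L - (n + 1) : ℕ) : ℤ) = L - (n + 1) := by
        push_cast [Nat.cast_sub hNL.le]
        ring
      rw [hρ, div_pow, div_pow, ← hw i, ← hw' j,
        show a + (L : ℤ) - 1 - n = a + ((L - (n + 1) : ℕ) : ℤ) by rw [hcast]; ring,
        show -(a + (L : ℤ)) + n + 2 = -a + 1 - ((L - (n + 1) : ℕ) : ℤ) by rw [hcast]; ring,
        zpow_add₀ (hw1' j), zpow_sub₀ (hw1 i), zpow_natCast, zpow_natCast]
      have := hw0 i
      have := hw1 i
      field_simp
    rw [hbethe, ← hKij] at h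
    rw [← h, hC, Matrix.of_apply]
    have := hsub i j
    field_simp
  have hdet : ∀ (p : ℤ) (r s α β : Fin (n + 1) → ℂ), p < a + L →
      (∀ i j, w' j / w i * ((w' j + 1) ^ p * (w i + 1) ^ (-p + 1)) =
        r i * s j * ((w' j + 1) ^ a * (w i + 1) ^ (-a + 1))) →
      (∀ i j, r i * s j * C i j = C i j + α i * β j) →
      (K p).det = (∏ i, (w i + 1) ^ (-a + 1)) * ((∏ j, (w' j + 1) ^ a) *
        ((ρ - 1) ^ (n + 1) * C.det - (ρ - 1) ^ n * ((∏ i, r i) * (∏ j, s j) - 1) * C.det)) := by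
    intro p r s α β hp hrs hαβ
    rw [← det_sub_mul_cauchy C r s α β ρ hαβ, ← Matrix.det_mul_row, ← Matrix.det_mul_column]
    congr 1
    ext i j
    rw [hKentry p hp, hrs]
    simp only [Matrix.of_apply]
    ring
  have hL : (0 : ℤ) < L := by omega
  have hK1 := hdet (a - 1) (fun i => (w i + 1) / w i) (fun j => w' j / (w' j + 1))
    (fun i => 1 / w i) (fun j => 1 / (w' j + 1)) (by omega)
    (by
      intro i j
      have := hw0 i
      have := hw1' j
      rw [show -(a - 1) + 1 = -a + 1 + 1 by ring, zpow_add_one₀ (hw1 i), zpow_sub_one₀ this]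
      field_simp)
    (by
      intro i j
      have := hw0 i
      have := hw1' j
      have := hsub i j
      simp only [hC, Matrix.of_apply]
      field_simp
      ring)
  have hK0 := hdet a (fun i => 1 / w i) w' (fun i => 1 / w i) (fun _ => 1) (by omega)
    (by intro i j; ring)
    (by
      intro i j
      have := hw0 i
      have := hsub i j
      simp only [hC, Matrix.of_apply]
      field_simp
      ring)
  have hsum : (∑' X : {X : Fin (n + 1) → ℤ // X ∈ XNL (n + 1) L ∧ X (⟨0, hN⟩ : Fin (n + 1)) = a},
      RXdet X.1 w * LXdet X.1 w') = (K (a - 1)).det - (K a).det := by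
    rw [← sum_det_mul_det u v hu hv (by omega : a < a + L) K fun _ => rfl]
    refine (tsum_XNL_eq_sum (by omega) a fun X => RXdet X w * LXdet X w').trans ?_
    refine Finset.sum_congr rfl fun Y _ => ?_
    rw [RXdet, LXdet, ← Matrix.det_transpose, ← Matrix.det_transpose (Matrix.of fun i j => _)]
    rfl
  have hp1 : ∏ j, (w' j * (w' j + 1) ^ (a - 1)) / (w j * (w j + 1) ^ (a - 2)) =
      (∏ i, (w i + 1) ^ (-a + 1)) * (∏ j, (w' j + 1) ^ a) *
        ((∏ i, (w i + 1) / w i) * ∏ j, w' j / (w' j + 1)) := by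
    simp only [← Finset.prod_mul_distrib]
    refine Finset.prod_congr rfl fun j _ => ?_
    have := hw0 j
    have := hw1 j
    have := hw1' j
    rw [zpow_sub_one₀ (hw1' j), show a - 2 = -(-a + 1) - 1 by ring, zpow_sub_one₀ (hw1 j), zpow_neg]
    field_simp
  have hp0 : ∏ j, (w' j * (w' j + 1) ^ a) / (w j * (w j + 1) ^ (a - 1)) =
      (∏ i, (w i + 1) ^ (-a + 1)) * (∏ j, (w' j + 1) ^ a) *
        ((∏ i, 1 / w i) * ∏ j, w' j) := by
    simp only [← Finset.prod_mul_distrib]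
    refine Finset.prod_congr rfl fun j _ => ?_
    have := hw0 j
    rw [show a - 1 = -(-a + 1) by ring, zpow_neg]
    field_simp
  rw [hsum, hK1, hK0, hp1, hp0, Nat.add_sub_cancel]
  ring
end

section
/- Let n ≥ 1 and let w_1,…,w_n, w′_1,…,w′_n be complex numbers with w_i ≠ 0 and w′_i ≠ 0 for all i and w_i ≠ w′_j for all i,j. Then ∑_{k=1}^{n} ∑_{(J_1,…,J_k),(J′_1,…,J′_k)} (−1)^{k + #(J_1,…,J_k) + #(J′_1,…,J′_k)} ∏_{j=1}^{k} [ ( ∏_{i′∈J′_j} w′_{i′} / ∏_{i∈J_j} w_i )^{|J_1|+⋯+|J_{j−1}|+1} · det[ 1/(w_i − w′_{i′}) ]_{i∈J_j, i′∈J′_j} ] = ( ∏_{j=1}^n (w′_j / w_j)^{n} ) · det[ 1/(w′_{i′} − w_i) ]_{i,i′=1}^{n}, where the inner sum is over all pairs of ordered partitions (J_1,…,J_k) and (J′_1,…,J′_k) of {1,…,n} into nonempty subsets satisfying |J_i| = |J′_i| for every i. -/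
open scoped BigOperators Classical

/-- `#(J_1,…,J_k)`: the number of pairs `(p,q)` with `p ∈ J_i`, `q ∈ J_j`,
`p < q` and `i > j`. -/
def hashTuple {n k : ℕ} (J : Fin k → Finset (Fin n)) : ℕ :=
  ∑ i : Fin k, ∑ j : Fin k,
    if j < i then (((J i) ×ˢ (J j)).filter fun pq => pq.1 < pq.2).card else 0

/-- `det[1/(w_i − w'_{i'})]_{i ∈ S, i' ∈ T}`: rows indexed by the elements of `S`
in increasing order and columns by the elements of `T` in increasing order
(requires `S.card = T.card`; junk value `0` otherwise). -/
noncomputable def cauchySubDet {n : ℕ} (w w' : Fin n → ℂ) (S T : Finset (Fin n)) : ℂ :=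
  if h : S.card = T.card then
    Matrix.det (Matrix.of fun a b : Fin S.card =>
      1 / (w (S.orderEmbOfFin rfl a) - w' (T.orderEmbOfFin h.symm b)))
  else 0

/-- The determinant of `t • D + c • J`, with `J` the all-ones matrix, is affine in `c`. -/
theorem exists_det_mul_add_const {m : ℕ} (D : Matrix (Fin (m + 1)) (Fin (m + 1)) ℂ) :
    ∃ s : ℂ, ∀ t c : ℂ,
      Matrix.det (Matrix.of fun i j => t * D i j + c) = t ^ (m + 1) * D.det + c * t ^ m * s := by
  let B : Matrix (Fin (m + 1)) (Fin (m + 1)) ℂ := Matrix.of fun i j => D i j - D 0 j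
  have hD : D.det = (B.updateRow 0 (D 0)).det := by
    refine Matrix.det_eq_of_forall_row_eq_smul_add_const (fun i => if i = 0 then 0 else 1) 0
      (by simp) fun i j => ?_
    by_cases hi : i = 0 <;> simp [hi, B, Matrix.updateRow_apply]
  refine ⟨(B.updateRow 0 1).det, fun t c => ?_⟩
  have hscale : ∀ r : Fin (m + 1) → ℂ,
      ((Matrix.of fun i j => t * B i j).updateRow 0 r).det = t ^ m * (B.updateRow 0 r).det := by
    intro r
    have hprod : (∏ i : Fin (m + 1), (if i = 0 then 1 else t)) = t ^ m := by
      simp [Fin.prod_univ_succ, Fin.succ_ne_zero]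
    rw [← hprod, ← Matrix.det_mul_column]
    congr 1
    ext i j
    by_cases hi : i = 0 <;> simp [hi, Matrix.updateRow_apply]
  have hrow : Matrix.det (Matrix.of fun i j => t * D i j + c) =
      ((Matrix.of fun i j => t * B i j).updateRow 0 (t • D 0 + c • 1)).det := by
    refine Matrix.det_eq_of_forall_row_eq_smul_add_const (fun i => if i = 0 then 0 else 1) 0
      (by simp) fun i j => ?_
    by_cases hi : i = 0
    · simp [hi, B, Matrix.updateRow_apply]
    · simp [hi, B, Matrix.updateRow_apply]; ring
  rw [hrow, Matrix.det_updateRow_add, Matrix.det_updateRow_smul, Matrix.det_updateRow_smul,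
    hscale, hscale, hD]
  ring

theorem det_cauchy_pencil_eq_zero {m : ℕ} (hm : 0 < m) (u v : Fin m → ℂ)
    (hu : ∀ i, u i ≠ 0) (huv : ∀ i j, u i ≠ v j) :
    Matrix.det (Matrix.of fun i j : Fin m =>
      v j / u i * (1 / (u i - v j)) + -((∏ a, v a) / ∏ a, u a) * (1 / (u i - v j))) = 0 := by
  obtain ⟨m, rfl⟩ := Nat.exists_eq_succ_of_ne_zero hm.ne'
  set X : ℂ := (∏ a, v a) / ∏ a, u a with hX
  let C : Matrix (Fin (m + 1)) (Fin (m + 1)) ℂ := Matrix.of fun i j => 1 / (u i - v j)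
  let D : Matrix (Fin (m + 1)) (Fin (m + 1)) ℂ := Matrix.of fun i j => u i * C i j
  obtain ⟨s, hs⟩ := exists_det_mul_add_const D
  have hD : D.det = (∏ a, u a) * C.det := Matrix.det_mul_column u C
  have hDJ : Matrix.det (Matrix.of fun i j => 1 * D i j + -1) = (∏ a, v a) * C.det := by
    rw [← Matrix.det_mul_row v C]
    congr 1
    ext i j
    have := sub_ne_zero.2 (huv i j)
    simp only [D, C, Matrix.of_apply]
    field_simp
    ring
  have hpencil : Matrix.det (Matrix.of fun i j : Fin (m + 1) =>
      v j / u i * (1 / (u i - v j)) + -X * (1 / (u i - v j))) =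
      (∏ a, (u a)⁻¹) * Matrix.det (Matrix.of fun i j => (1 - X) * D i j + -1) := by
    rw [← Matrix.det_mul_column]
    congr 1
    ext i j
    have := sub_ne_zero.2 (huv i j)
    have := hu i
    simp only [D, C, Matrix.of_apply]
    field_simp
    ring
  have hXu : X * ∏ a, u a = ∏ a, v a := by
    rw [hX, div_mul_cancel₀ _ (Finset.prod_ne_zero_iff.2 fun a _ => hu a)]
  rw [hs] at hDJ
  rw [hpencil, hs, hD]
  rw [hD] at hDJ
  have : (1 - X) ^ (m + 1) * ((∏ a, u a) * C.det) + -1 * (1 - X) ^ m * s = 0 := by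
    linear_combination (1 - X) ^ m * hDJ - (1 - X) ^ m * C.det * hXu
  rw [this, mul_zero]

/-- The minor of `M` on the rows `S` and columns `T`, each listed in increasing order; it is `0`
when `S` and `T` have different sizes. -/
noncomputable def subDet {n : ℕ} (M : Fin n → Fin n → ℂ) (S T : Finset (Fin n)) : ℂ :=
  if h : S.card = T.card then
    Matrix.det (Matrix.of fun a b : Fin S.card =>
      M (S.orderEmbOfFin rfl a) (T.orderEmbOfFin h.symm b))
  else 0

theorem subDet_eq_det {n m : ℕ} (M : Fin n → Fin n → ℂ) {S T : Finset (Fin n)}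
    (hS : S.card = m) (hT : T.card = m) :
    subDet M S T = Matrix.det (Matrix.of fun a b : Fin m =>
      M (S.orderEmbOfFin hS a) (T.orderEmbOfFin hT b)) := by
  subst hS
  exact dif_pos hT.symm

theorem subDet_of_card_ne {n : ℕ} (M : Fin n → Fin n → ℂ) {S T : Finset (Fin n)}
    (h : S.card ≠ T.card) : subDet M S T = 0 :=
  dif_neg h

theorem subDet_empty {n : ℕ} (M : Fin n → Fin n → ℂ) : subDet M ∅ ∅ = 1 := by
  rw [subDet_eq_det M (m := 0) (by simp) (by simp)]
  simp

theorem prod_orderEmbOfFin {n m : ℕ} {S : Finset (Fin n)} (hS : S.card = m) (f : Fin n → ℂ) :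
    ∏ a, f (S.orderEmbOfFin hS a) = ∏ i ∈ S, f i := by
  conv_rhs => rw [← S.map_orderEmbOfFin_univ hS, Finset.prod_map]
  rfl

theorem subDet_mul_mul {n : ℕ} (f g : Fin n → ℂ) (M : Fin n → Fin n → ℂ)
    (S T : Finset (Fin n)) :
    subDet (fun i j => f i * (g j * M i j)) S T =
      (∏ i ∈ S, f i) * ((∏ j ∈ T, g j) * subDet M S T) := by
  by_cases h : S.card = T.card
  · rw [subDet_eq_det _ rfl h.symm, subDet_eq_det _ rfl h.symm, ← prod_orderEmbOfFin rfl f,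
      ← prod_orderEmbOfFin h.symm g, ← Matrix.det_mul_row, ← Matrix.det_mul_column]
    rfl
  · simp [subDet_of_card_ne _ h]

theorem card_filter_lt_orderEmbOfFin {n m : ℕ} {T : Finset (Fin n)} (hT : T.card = m)
    (j : Fin m) : (T.filter (· < T.orderEmbOfFin hT j)).card = j := by
  have hcard : ∀ c, (T.filter (· < c)).card =
      (Finset.univ.filter fun a => T.orderEmbOfFin hT a < c).card := by
    intro c
    conv_lhs => rw [← T.map_orderEmbOfFin_univ hT, Finset.filter_map, Finset.card_map]
    rfl
  have hIio : (Finset.univ.filter fun a => T.orderEmbOfFin hT a < T.orderEmbOfFin hT j) =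
      Finset.Iio j := by
    ext a
    simp
  rw [hcard, hIio, Fin.card_Iio]

theorem orderEmbOfFin_erase {n m : ℕ} {T : Finset (Fin n)} (hT : T.card = m + 1)
    (j : Fin (m + 1)) (h : (T.erase (T.orderEmbOfFin hT j)).card = m) (a : Fin m) :
    (T.erase (T.orderEmbOfFin hT j)).orderEmbOfFin h a = T.orderEmbOfFin hT (j.succAbove a) := by
  refine (congrFun (Finset.orderEmbOfFin_unique h (f := fun a => T.orderEmbOfFin hT (j.succAbove a))
    (fun a => ?_) ?_) a).symm
  · simp [Fin.succAbove_ne]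
  · exact (T.orderEmbOfFin hT).strictMono.comp (Fin.strictMono_succAbove j)

/-- Laplace expansion of a minor along its first row. -/
theorem subDet_insert_min {n : ℕ} (M : Fin n → Fin n → ℂ) {s : Fin n} {S : Finset (Fin n)}
    (hs : ∀ x ∈ S, s < x) (T : Finset (Fin n)) :
    subDet M (insert s S) T =
      ∑ b ∈ T, (-1) ^ (T.filter (· < b)).card * M s b * subDet M S (T.erase b) := by
  have hsS : s ∉ S := fun h => (hs s h).false
  by_cases h : T.card = S.card + 1
  · have hS : (insert s S).card = S.card + 1 := Finset.card_insert_of_notMem hsS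
    have h0 : (insert s S).orderEmbOfFin hS 0 = s := by
      rw [← Fin.mk_zero' , Finset.orderEmbOfFin_zero hS (Nat.succ_pos _)]
      exact le_antisymm (Finset.min'_le _ _ (Finset.mem_insert_self _ _))
        (Finset.le_min' _ _ _ fun y hy => by
          rcases Finset.mem_insert.1 hy with rfl | hy
          exacts [le_rfl, (hs y hy).le])
    have hsucc : ∀ a, (insert s S).orderEmbOfFin hS (Fin.succ a) = S.orderEmbOfFin rfl a := by
      intro a
      have herase : (insert s S).erase ((insert s S).orderEmbOfFin hS 0) = S := by
        rw [h0, Finset.erase_insert hsS]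
      have := orderEmbOfFin_erase hS 0 (by rw [herase]) a
      rw [Fin.succAbove_zero] at this
      rw [← this]
      congr 1
      simp only [herase]
    rw [subDet_eq_det M hS h, Matrix.det_succ_row_zero]
    conv_rhs => rw [← Finset.sum_attach]
    rw [← Finset.sum_coe_sort_eq_attach, ← (T.orderIsoOfFin h).toEquiv.sum_comp]
    refine Finset.sum_congr rfl fun j _ => ?_
    have hval : (((T.orderIsoOfFin h).toEquiv j : T) : Fin n) = T.orderEmbOfFin h j := rfl
    have hc : (T.erase (T.orderEmbOfFin h j)).card = S.card := by
      rw [Finset.card_erase_of_mem (Finset.orderEmbOfFin_mem _ _ _), h]; rfl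
    rw [hval, card_filter_lt_orderEmbOfFin, subDet_eq_det M rfl hc]
    simp only [Matrix.of_apply, h0]
    congr 2
    ext a b
    simp [hsucc, orderEmbOfFin_erase]
  · rw [subDet_of_card_ne _ (by rw [Finset.card_insert_of_notMem hsS]; exact Ne.symm h)]
    refine (Finset.sum_eq_zero fun b hb => ?_).symm
    rw [subDet_of_card_ne, mul_zero]
    have := Finset.card_erase_add_one hb
    omega

/-- The number of pairs `(p, q) ∈ A × B` with `p < q`. -/
def ascents {n : ℕ} (A B : Finset (Fin n)) : ℕ :=
  ((A ×ˢ B).filter fun pq => pq.1 < pq.2).card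

theorem ascents_insert_left {n : ℕ} {s : Fin n} {A : Finset (Fin n)} (hs : s ∉ A)
    (B : Finset (Fin n)) : ascents (insert s A) B = (B.filter (s < ·)).card + ascents A B := by
  simp only [ascents, Finset.card_filter, Finset.sum_product, Finset.sum_insert hs]

theorem ascents_insert_right {n : ℕ} (A : Finset (Fin n)) {b : Fin n} {B : Finset (Fin n)}
    (hb : b ∉ B) : ascents A (insert b B) = (A.filter (· < b)).card + ascents A B := by
  simp only [ascents, Finset.card_filter, Finset.sum_product_right, Finset.sum_insert hb]

theorem sum_powerset_sum_mem {n : ℕ} (T : Finset (Fin n)) (g : Finset (Fin n) → Fin n → ℂ) :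
    ∑ B ∈ T.powerset, ∑ b ∈ B, g B b =
      ∑ b ∈ T, ∑ B ∈ (T.erase b).powerset, g (insert b B) b := by
  rw [Finset.sum_sigma', Finset.sum_sigma']
  refine Finset.sum_bij' (fun x _ => ⟨x.2, x.1.erase x.2⟩) (fun x _ => ⟨insert x.1 x.2, x.1⟩)
    ?_ ?_ ?_ ?_ ?_
  · rintro ⟨B, b⟩ h
    simp only [Finset.mem_sigma, Finset.mem_powerset] at h ⊢
    exact ⟨h.1 h.2, Finset.erase_subset_erase _ h.1⟩
  · rintro ⟨b, B⟩ h
    simp only [Finset.mem_sigma, Finset.mem_powerset] at h ⊢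
    exact ⟨Finset.insert_subset h.1 (h.2.trans (Finset.erase_subset _ _)),
      Finset.mem_insert_self _ _⟩
  · rintro ⟨B, b⟩ h
    simp only [Finset.mem_sigma] at h
    simp [Finset.insert_erase h.2]
  · rintro ⟨b, B⟩ h
    simp only [Finset.mem_sigma, Finset.mem_powerset] at h
    simp [Finset.erase_insert fun hb => Finset.notMem_erase b T (h.2 hb)]
  · rintro ⟨B, b⟩ h
    simp only [Finset.mem_sigma] at h
    simp [Finset.insert_erase h.2]

theorem sum_powerset_sum_sdiff {n : ℕ} (T : Finset (Fin n)) (g : Finset (Fin n) → Fin n → ℂ) :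
    ∑ B ∈ T.powerset, ∑ b ∈ T \ B, g B b =
      ∑ b ∈ T, ∑ B ∈ (T.erase b).powerset, g B b := by
  refine Finset.sum_comm' fun B b => ?_
  simp only [Finset.mem_powerset, Finset.mem_sdiff, Finset.subset_erase]
  tauto

theorem card_filter_lt_eq_add {n : ℕ} {T B : Finset (Fin n)} {b : Fin n}
    (hB : B ⊆ T.erase b) :
    (T.filter (· < b)).card = (B.filter (· < b)).card + ((T.erase b \ B).filter (· < b)).card := by
  rw [← Finset.card_union_of_disjoint
    (Finset.disjoint_filter_filter Finset.disjoint_sdiff), ← Finset.filter_union,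
    Finset.union_sdiff_of_subset hB, Finset.filter_erase, Finset.erase_eq_of_notMem (by simp)]

/-- Laplace expansion of the minors of a sum of two matrices. -/
theorem subDet_add {n : ℕ} (M N : Fin n → Fin n → ℂ) (S T : Finset (Fin n)) :
    subDet (fun i j => M i j + N i j) S T =
      ∑ A ∈ S.powerset, ∑ B ∈ T.powerset,
        (-1) ^ (ascents A (S \ A) + ascents B (T \ B)) *
          (subDet M A B * subDet N (S \ A) (T \ B)) := by
  induction S using Finset.induction_on_min generalizing T with
  | empty =>
    rw [Finset.powerset_empty, Finset.sum_singleton]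
    by_cases hT : T = ∅
    · subst hT
      simp [subDet_empty, ascents]
    · rw [subDet_of_card_ne _ (by simpa [eq_comm] using hT)]
      refine (Finset.sum_eq_zero fun B _ => ?_).symm
      by_cases hB : B = ∅
      · subst hB
        rw [subDet_of_card_ne N (by simpa [eq_comm] using hT)]
        simp
      · rw [subDet_of_card_ne M (by simpa [eq_comm] using hB)]
        simp
  | insert s S hs ih =>
    have hsS : s ∉ S := fun h => (hs s h).false
    rw [Finset.sum_powerset_insert hsS, subDet_insert_min _ hs, ← Finset.sum_add_distrib]
    have hrow : ∀ A ∈ S.powerset,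
        (∑ B ∈ T.powerset, (-1) ^ (ascents A (insert s S \ A) + ascents B (T \ B)) *
            (subDet M A B * subDet N (insert s S \ A) (T \ B))) +
          (∑ B ∈ T.powerset, (-1) ^ (ascents (insert s A) (insert s S \ insert s A) +
              ascents B (T \ B)) *
            (subDet M (insert s A) B * subDet N (insert s S \ insert s A) (T \ B))) =
        ∑ b ∈ T, ∑ B ∈ (T.erase b).powerset,
          (-1) ^ (T.filter (· < b)).card * (M s b + N s b) *
            ((-1) ^ (ascents A (S \ A) + ascents B (T.erase b \ B)) *
              (subDet M A B * subDet N (S \ A) (T.erase b \ B))) := by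
      intro A hA
      rw [Finset.mem_powerset] at hA
      have hsA : s ∉ A := fun h => hsS (hA h)
      have hsC : s ∉ S \ A := fun h => hsS (Finset.sdiff_subset h)
      have hdiff : insert s S \ A = insert s (S \ A) := Finset.insert_sdiff_of_notMem _ hsA
      have hdiff' : insert s S \ insert s A = S \ A := by
        rw [Finset.insert_sdiff_insert, Finset.sdiff_insert_of_notMem hsS]
      have hC : ∀ x ∈ S \ A, s < x := fun x hx => hs x (Finset.sdiff_subset hx)
      have hA' : ∀ x ∈ A, s < x := fun x hx => hs x (hA hx)
      simp only [hdiff, hdiff', subDet_insert_min _ hC, subDet_insert_min _ hA',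
        Finset.mul_sum, Finset.sum_mul]
      rw [sum_powerset_sum_sdiff, sum_powerset_sum_mem, ← Finset.sum_add_distrib]
      refine Finset.sum_congr rfl fun b hb => ?_
      rw [← Finset.sum_add_distrib]
      refine Finset.sum_congr rfl fun B hB => ?_
      rw [Finset.mem_powerset] at hB
      have hbB : b ∉ B := fun h => Finset.notMem_erase b T (hB h)
      have hbC : b ∉ T.erase b \ B := fun h => Finset.notMem_erase b T (Finset.sdiff_subset h)
      have hTB : T \ B = insert b (T.erase b \ B) := by
        rw [← Finset.insert_sdiff_of_notMem _ hbB, Finset.insert_erase hb]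
      have hTB' : T \ insert b B = T.erase b \ B := by
        ext x; simp only [Finset.mem_sdiff, Finset.mem_insert, Finset.mem_erase]; tauto
      have hfC : ((T \ B).filter (· < b)).card = ((T.erase b \ B).filter (· < b)).card := by
        rw [hTB, Finset.filter_insert]; simp
      have hfB : ((insert b B).filter (· < b)).card = (B.filter (· < b)).card := by
        rw [Finset.filter_insert]; simp
      have hTerase : (T \ B).erase b = T.erase b \ B := by
        rw [hTB, Finset.erase_insert hbC]
      have hAs : A.filter (· < s) = ∅ :=
        Finset.filter_eq_empty_iff.2 fun x hx => (hA' x hx).le.not_gt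
      have hSs : (S \ A).filter (s < ·) = S \ A := Finset.filter_true_of_mem hC
      rw [hfC, hfB, hTerase, hTB', Finset.erase_insert hbB, card_filter_lt_eq_add hB,
        ascents_insert_right _ hsC, ascents_insert_left hsA, ascents_insert_left hbB, hAs, hSs]
      rw [hTB, ascents_insert_right _ hbC]
      by_cases hcard : (S \ A).card = (T.erase b \ B).card
      · have hsplit : (T.erase b \ B).card = ((T.erase b \ B).filter (· < b)).card +
            ((T.erase b \ B).filter (b < ·)).card := by
          rw [← Finset.card_union_of_disjoint, ← Finset.filter_or, Finset.filter_true_of_mem]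
          · exact fun x hx => lt_or_gt_of_ne fun h => hbC (h ▸ hx)
          · exact Finset.disjoint_filter.2 fun x _ h => h.le.not_gt
        rw [hcard, hsplit]
        have hsq : ∀ e : ℕ, ((-1 : ℂ) ^ e) ^ 2 = 1 := fun e => by
          rw [← pow_mul, mul_comm, pow_mul]; norm_num
        simp only [pow_add, Finset.card_empty, pow_zero]
        linear_combination (M s b * (-1) ^ (B.filter (· < b)).card *
          (-1) ^ ((T.erase b \ B).filter (· < b)).card * (-1) ^ ascents A (S \ A) *
          (-1) ^ ascents B (T.erase b \ B) * subDet M A B * subDet N (S \ A) (T.erase b \ B)) *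
          hsq ((T.erase b \ B).filter (b < ·)).card
      · simp [subDet_of_card_ne N hcard]
    rw [Finset.sum_congr rfl hrow, Finset.sum_comm]
    refine Finset.sum_congr rfl fun b _ => ?_
    rw [ih]
    simp only [Finset.mul_sum]

/-- `J` is an ordered partition of `S` into nonempty blocks. -/
def IsOrderedPartition {n k : ℕ} (J : Fin k → Finset (Fin n)) (S : Finset (Fin n)) : Prop :=
  (∀ i, (J i).Nonempty) ∧ (∀ i j, i ≠ j → Disjoint (J i) (J j)) ∧ Finset.univ.biUnion J = S

theorem isOrderedPartition_snoc {n k : ℕ} (J : Fin k → Finset (Fin n)) (A S : Finset (Fin n)) :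
    IsOrderedPartition (Fin.snoc J A : Fin (k + 1) → Finset (Fin n)) S ↔
      (A.Nonempty ∧ A ⊆ S) ∧ IsOrderedPartition J (S \ A) := by
  have hunion : Finset.univ.biUnion (Fin.snoc J A : Fin (k + 1) → Finset (Fin n)) =
      A ∪ Finset.univ.biUnion J := by
    ext x
    simp [Fin.exists_fin_succ', or_comm]
  simp only [IsOrderedPartition, hunion, Fin.forall_fin_succ', Fin.snoc_castSucc, Fin.snoc_last]
  constructor
  · rintro ⟨⟨hJ, hA⟩, ⟨hdisj, hlast⟩, rfl⟩
    refine ⟨⟨hA, Finset.subset_union_left⟩, hJ,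
      fun i j hij => (hdisj i).1 j (by simpa using hij), ?_⟩
    rw [Finset.union_sdiff_cancel_left]
    exact (Finset.disjoint_biUnion_right _ _ _).2 fun i _ =>
      hlast.1 i (Fin.castSucc_lt_last i).ne'
  · rintro ⟨⟨hA, hAS⟩, hJ, hdisj, hS⟩
    have hAJ : ∀ i, Disjoint A (J i) := fun i =>
      (Finset.disjoint_biUnion_right _ _ _).1 (hS ▸ Finset.disjoint_sdiff) i (Finset.mem_univ i)
    refine ⟨⟨hJ, hA⟩, ⟨fun i => ⟨fun j hij => hdisj i j (by simpa using hij),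
      fun _ => (hAJ i).symm⟩, fun i _ => hAJ i, fun h => (h rfl).elim⟩, ?_⟩
    rw [hS, Finset.union_sdiff_of_subset hAS]

theorem IsOrderedPartition.sum_card {n k : ℕ} {J : Fin k → Finset (Fin n)} {S : Finset (Fin n)}
    (hJ : IsOrderedPartition J S) : ∑ i, (J i).card = S.card := by
  rw [← hJ.2.2, Finset.card_biUnion fun i _ j _ => hJ.2.1 i j]

theorem IsOrderedPartition.hashTuple_snoc {n k : ℕ} {J : Fin k → Finset (Fin n)}
    {S : Finset (Fin n)} (hJ : IsOrderedPartition J S) (A : Finset (Fin n)) :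
    hashTuple (Fin.snoc J A : Fin (k + 1) → Finset (Fin n)) = hashTuple J + ascents A S := by
  have hsum : ∑ j, ascents A (J j) = ascents A S := by
    simp only [ascents, Finset.card_filter, Finset.sum_product_right]
    rw [← hJ.2.2, Finset.sum_biUnion fun i _ j _ => hJ.2.1 i j]
  rw [← hsum]
  simp [hashTuple, ascents, Fin.sum_univ_castSucc, Fin.castSucc_lt_last, (Fin.le_last _).not_gt]

/-- The summand attached to a pair of ordered partitions. -/
noncomputable def partitionTerm {n k : ℕ} (w w' : Fin n → ℂ) (J J' : Fin k → Finset (Fin n)) : ℂ :=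
  (-1 : ℂ) ^ (k + hashTuple J + hashTuple J') *
    ∏ j : Fin k,
      (((∏ i ∈ J' j, w' i) / ∏ i ∈ J j, w i) ^
          ((∑ i ∈ Finset.univ.filter (fun i => i < j), (J i).card) + 1) *
        cauchySubDet w w' (J j) (J' j))

theorem partitionTerm_snoc {n k : ℕ} (w w' : Fin n → ℂ) {J J' : Fin k → Finset (Fin n)}
    {S T : Finset (Fin n)} (hJ : IsOrderedPartition J S) (hJ' : IsOrderedPartition J' T)
    (A B : Finset (Fin n)) :
    partitionTerm w w' (Fin.snoc J A : Fin (k + 1) → Finset (Fin n))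
        (Fin.snoc J' B : Fin (k + 1) → Finset (Fin n)) =
      -((-1) ^ (ascents A S + ascents B T) * ((∏ i ∈ B, w' i) / ∏ i ∈ A, w i) ^ (S.card + 1) *
        cauchySubDet w w' A B) * partitionTerm w w' J J' := by
  have hlt : ∀ j : Fin k, ∑ i ∈ Finset.univ.filter (fun i => i < Fin.castSucc j),
      ((Fin.snoc J A : Fin (k + 1) → Finset (Fin n)) i).card =
      ∑ i ∈ Finset.univ.filter (fun i => i < j), (J i).card := by
    intro j
    simp [Finset.sum_filter, Fin.sum_univ_castSucc, (Fin.le_last _).not_gt]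
  have hlast : ∑ i ∈ Finset.univ.filter (fun i => i < Fin.last k),
      ((Fin.snoc J A : Fin (k + 1) → Finset (Fin n)) i).card = S.card := by
    simp [Finset.sum_filter, Fin.sum_univ_castSucc, Fin.castSucc_lt_last, ← hJ.sum_card]
  rw [partitionTerm, partitionTerm, hJ.hashTuple_snoc, hJ'.hashTuple_snoc, Fin.prod_univ_castSucc]
  simp only [hlt, hlast, Fin.snoc_castSucc, Fin.snoc_last, pow_add]
  ring

/-- The sum over pairs of ordered partitions of `S` and `T` into `k` blocks. -/
noncomputable def partitionSum {n : ℕ} (w w' : Fin n → ℂ) (k : ℕ) (S T : Finset (Fin n)) : ℂ :=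
  ∑ J : Fin k → Finset (Fin n), ∑ J' : Fin k → Finset (Fin n),
    if IsOrderedPartition J S ∧ IsOrderedPartition J' T ∧ ∀ i, (J i).card = (J' i).card then
      partitionTerm w w' J J' else 0

theorem partitionSum_zero_empty {n : ℕ} (w w' : Fin n → ℂ) : partitionSum w w' 0 ∅ ∅ = 1 := by
  simp [partitionSum, IsOrderedPartition, partitionTerm, hashTuple]

theorem partitionSum_zero_of_nonempty {n : ℕ} (w w' : Fin n → ℂ) {S : Finset (Fin n)}
    (hS : S.Nonempty) (T : Finset (Fin n)) : partitionSum w w' 0 S T = 0 := by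
  simp [partitionSum, IsOrderedPartition, hS.ne_empty.symm]

/-- Splitting off the last block. -/
theorem partitionSum_succ {n : ℕ} (w w' : Fin n → ℂ) (k : ℕ) (S T : Finset (Fin n)) :
    partitionSum w w' (k + 1) S T =
      ∑ A ∈ S.powerset.erase ∅, ∑ B ∈ T.powerset,
        -((-1) ^ (ascents A (S \ A) + ascents B (T \ B)) *
          ((∏ i ∈ B, w' i) / ∏ i ∈ A, w i) ^ ((S \ A).card + 1) * cauchySubDet w w' A B) *
          partitionSum w w' k (S \ A) (T \ B) := by
  have hsnoc : ∀ f : (Fin (k + 1) → Finset (Fin n)) → ℂ,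
      ∑ J, f J = ∑ A : Finset (Fin n), ∑ J : Fin k → Finset (Fin n), f (Fin.snoc J A) := by
    intro f
    rw [← (Fin.snocEquiv fun _ => Finset (Fin n)).sum_comp, Fintype.sum_prod_type]
    rfl
  rw [partitionSum, hsnoc]
  simp only [hsnoc, isOrderedPartition_snoc, Fin.forall_fin_succ', Fin.snoc_castSucc, Fin.snoc_last]
  rw [← Finset.sum_subset (Finset.subset_univ (S.powerset.erase ∅))]
  swap
  · intro A _ hA
    have hA' : ¬ (A.Nonempty ∧ A ⊆ S) := by
      simpa [Finset.nonempty_iff_ne_empty] using hA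
    simp [hA']
  refine Finset.sum_congr rfl fun A hA => ?_
  have hA' : A.Nonempty ∧ A ⊆ S := by
    simpa [Finset.nonempty_iff_ne_empty] using hA
  rw [Finset.sum_comm, ← Finset.sum_subset (Finset.subset_univ T.powerset)]
  swap
  · intro B _ hB
    have hB' : ¬ B ⊆ T := by simpa using hB
    simp [hB']
  refine Finset.sum_congr rfl fun B hB => ?_
  have hBT : B ⊆ T := by simpa using hB
  by_cases hcard : A.card = B.card
  · have hB' : B.Nonempty ∧ B ⊆ T :=
      ⟨Finset.card_pos.1 (hcard ▸ Finset.card_pos.2 hA'.1), hBT⟩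
    rw [partitionSum]
    simp only [Finset.mul_sum]
    refine Finset.sum_congr rfl fun J _ => Finset.sum_congr rfl fun J' _ => ?_
    simp only [hA', hB', hcard, true_and, and_true]
    split_ifs with h
    · exact partitionTerm_snoc w w' h.1 h.2.1 A B
    · rw [mul_zero]
  · simp [hcard, cauchySubDet]

theorem cauchySubDet_eq_subDet {n : ℕ} (w w' : Fin n → ℂ) (S T : Finset (Fin n)) :
    cauchySubDet w w' S T = subDet (fun i j => 1 / (w i - w' j)) S T :=
  rfl

/-- The convolution of the scaled Cauchy minors vanishes. -/
theorem sum_cauchySubDet_mul_eq_zero {n : ℕ} (w w' : Fin n → ℂ) (hw : ∀ i, w i ≠ 0)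
    (hww' : ∀ i j, w i ≠ w' j) {S T : Finset (Fin n)} (hS : S.Nonempty) (hST : S.card = T.card) :
    ∑ A ∈ S.powerset, ∑ B ∈ T.powerset,
      (-1) ^ (ascents A (S \ A) + ascents B (T \ B)) *
        ((∏ j ∈ B, w' j) / (∏ i ∈ A, w i) * cauchySubDet w w' A B *
          ((-((∏ j ∈ T, w' j) / ∏ i ∈ S, w i)) ^ (S \ A).card *
            cauchySubDet w w' (S \ A) (T \ B))) = 0 := by
  set X : ℂ := (∏ j ∈ T, w' j) / ∏ i ∈ S, w i with hX
  have hM : ∀ A B, subDet (fun i j => w' j / w i * (1 / (w i - w' j))) A B =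
      (∏ j ∈ B, w' j) / (∏ i ∈ A, w i) * cauchySubDet w w' A B := by
    intro A B
    rw [cauchySubDet_eq_subDet, div_eq_inv_mul, mul_assoc, ← Finset.prod_inv_distrib,
      ← subDet_mul_mul]
    congr 1
    ext i j
    ring
  have hN : ∀ A B, subDet (fun i j => -X * (1 / (w i - w' j))) A B =
      (-X) ^ A.card * cauchySubDet w w' A B := by
    intro A B
    have := subDet_mul_mul (fun _ => -X) (fun _ => 1) (fun i j => 1 / (w i - w' j)) A B
    simpa only [Finset.prod_const, one_pow, one_mul, cauchySubDet_eq_subDet] using this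
  simp only [← hM, ← hN]
  rw [← subDet_add, subDet_eq_det _ rfl hST.symm, hX, ← prod_orderEmbOfFin rfl w,
    ← prod_orderEmbOfFin hST.symm w']
  exact det_cauchy_pencil_eq_zero (Finset.card_pos.2 hS) (fun a => w (S.orderEmbOfFin rfl a))
    (fun b => w' (T.orderEmbOfFin hST.symm b)) (fun _ => hw _) fun _ _ => hww' _ _

theorem sum_partitionSum {n : ℕ} (w w' : Fin n → ℂ) (hw : ∀ i, w i ≠ 0)
    (hww' : ∀ i j, w i ≠ w' j) (N : ℕ) (S T : Finset (Fin n)) (hST : S.card = T.card)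
    (hN : S.card ≤ N) :
    ∑ k ∈ Finset.range (N + 1), partitionSum w w' k S T =
      (-((∏ j ∈ T, w' j) / ∏ i ∈ S, w i)) ^ S.card * cauchySubDet w w' S T := by
  induction N generalizing S T with
  | zero =>
    obtain rfl : S = ∅ := Finset.card_eq_zero.1 (Nat.le_zero.1 hN)
    obtain rfl : T = ∅ := Finset.card_eq_zero.1 hST.symm
    simp [partitionSum_zero_empty, cauchySubDet_eq_subDet, subDet_empty]
  | succ N ih =>
    rw [Finset.sum_range_succ']
    rcases S.eq_empty_or_nonempty with rfl | hS
    · obtain rfl : T = ∅ := Finset.card_eq_zero.1 hST.symm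
      simp [partitionSum_zero_empty, partitionSum_succ, cauchySubDet_eq_subDet, subDet_empty]
    rw [partitionSum_zero_of_nonempty w w' hS, add_zero]
    simp only [partitionSum_succ]
    rw [Finset.sum_comm]
    have hconv := sum_cauchySubDet_mul_eq_zero w w' hw hww' hS hST
    rw [← Finset.add_sum_erase _ _ (Finset.empty_mem_powerset S),
      Finset.sum_eq_single_of_mem ∅ (Finset.empty_mem_powerset T)] at hconv
    · simp only [Finset.prod_empty, Finset.sdiff_empty, cauchySubDet_eq_subDet w w' ∅ ∅,
        subDet_empty] at hconv
      have h0 : ∀ U : Finset (Fin n), ascents ∅ U = 0 := fun U => by simp [ascents]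
      rw [h0, h0, add_zero, pow_zero, one_mul, div_one, one_mul, one_mul] at hconv
      rw [eq_neg_of_add_eq_zero_left hconv, ← Finset.sum_neg_distrib]
      refine Finset.sum_congr rfl fun A hA => ?_
      have hA' : A.Nonempty ∧ A ⊆ S := by
        simpa [Finset.nonempty_iff_ne_empty] using hA
      rw [Finset.sum_comm, ← Finset.sum_neg_distrib]
      refine Finset.sum_congr rfl fun B hB => ?_
      have hBT : B ⊆ T := by simpa using hB
      rw [← Finset.mul_sum]
      by_cases hcard : A.card = B.card
      · have hpos := Finset.card_pos.2 hA'.1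
        have hcS := Finset.card_sdiff_add_card_eq_card hA'.2
        have hcT := Finset.card_sdiff_add_card_eq_card hBT
        rw [ih _ _ (by omega) (by omega), ← Finset.prod_sdiff hA'.2, ← Finset.prod_sdiff hBT,
          mul_div_mul_comm, neg_pow, neg_pow (_ * _), mul_pow, pow_succ]
        ring
      · simp [cauchySubDet_eq_subDet, subDet_of_card_ne _ hcard]
    · intro B _ hB
      rw [cauchySubDet_eq_subDet w w' ∅ B, subDet_of_card_ne _ (by simpa [eq_comm] using hB)]
      simp

/-- Summation over pairs of ordered partitions (Lemma: identity_02). The inner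
sum is over all pairs of ordered partitions `(J_1,…,J_k)`, `(J'_1,…,J'_k)` of
`{1,…,n}` into nonempty subsets with `|J_i| = |J'_i|` for all `i`. -/
theorem ordered_partition_sum_identity
    (n : ℕ) (hn : 1 ≤ n) (w w' : Fin n → ℂ)
    (hw : ∀ i, w i ≠ 0) (hw' : ∀ i, w' i ≠ 0) (hww' : ∀ i j, w i ≠ w' j) :
    (∑ k ∈ Finset.Icc 1 n,
      ∑ J : Fin k → Finset (Fin n), ∑ J' : Fin k → Finset (Fin n),
        if ((∀ i, (J i).Nonempty) ∧ (∀ i, (J' i).Nonempty) ∧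
            (∀ i j, i ≠ j → Disjoint (J i) (J j)) ∧
            (∀ i j, i ≠ j → Disjoint (J' i) (J' j)) ∧
            Finset.univ.biUnion J = Finset.univ ∧
            Finset.univ.biUnion J' = Finset.univ ∧
            (∀ i, (J i).card = (J' i).card)) then
          (-1 : ℂ) ^ (k + hashTuple J + hashTuple J') *
            ∏ j : Fin k,
              (((∏ i ∈ J' j, w' i) / ∏ i ∈ J j, w i) ^
                  ((∑ i ∈ Finset.univ.filter (fun i => i < j), (J i).card) + 1) *
                cauchySubDet w w' (J j) (J' j))
        else 0) =
      (∏ j : Fin n, (w' j / w j) ^ n) *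
        Matrix.det (Matrix.of fun i i' : Fin n => 1 / (w' i' - w i)) := by
  have hsum := sum_partitionSum w w' hw hww' n Finset.univ Finset.univ rfl (by simp)
  have huniv : (Finset.univ : Finset (Fin n)).Nonempty := ⟨⟨0, hn⟩, Finset.mem_univ _⟩
  have hIcc : Finset.range (n + 1) = insert 0 (Finset.Icc 1 n) := by
    ext k
    simp only [Finset.mem_range, Finset.mem_insert, Finset.mem_Icc]
    omega
  rw [hIcc, Finset.sum_insert (by simp), partitionSum_zero_of_nonempty w w' huniv, zero_add] at hsum
  have hdet : Matrix.det (Matrix.of fun i i' : Fin n => 1 / (w' i' - w i)) =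
      (-1) ^ n * cauchySubDet w w' Finset.univ Finset.univ := by
    have hid : ∀ a, (Finset.univ : Finset (Fin n)).orderEmbOfFin (Finset.card_fin n) a = a :=
      fun a => (congrFun (Finset.orderEmbOfFin_unique (Finset.card_fin n) (f := id)
        (fun _ => Finset.mem_univ _) strictMono_id) a).symm
    have hneg := Matrix.det_mul_column (fun _ => -1) (Matrix.of fun i i' => 1 / (w i - w' i'))
    rw [Finset.prod_const, Finset.card_fin] at hneg
    rw [cauchySubDet_eq_subDet, subDet_eq_det _ (Finset.card_fin n) (Finset.card_fin n)]
    simp only [hid]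
    rw [← hneg]
    congr 1
    ext i j
    rw [Matrix.of_apply, Matrix.of_apply, Matrix.of_apply, ← neg_sub (w i) (w' j),
      one_div_neg_eq_neg_one_div, neg_one_mul]
  rw [hdet, Finset.prod_pow, Finset.prod_div_distrib, ← mul_assoc, mul_comm (_ ^ n) ((-1) ^ n),
    ← neg_pow]
  rw [Finset.card_fin] at hsum
  rw [← hsum]
  refine Finset.sum_congr rfl fun k _ => Finset.sum_congr rfl fun J _ =>
    Finset.sum_congr rfl fun J' _ => ?_
  refine if_congr ?_ rfl rfl
  simp only [IsOrderedPartition]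
  tauto
end

section
/- Let m ≥ 1 and let S_1,…,S_m and S′_1,…,S′_m be finite sets; let Σ be the disjoint union of the S_i and Σ′ the disjoint union of the S′_i. Let A : Σ × Σ′ → ℂ and B : Σ′ × Σ → ℂ satisfy the block conditions: A(w,w′) = 0 unless there is an index i with w ∈ S_{2i−1} ∪ S_{2i} and w′ ∈ S′_{2i−1} ∪ S′_{2i}; and B(w′,w) = 0 unless there is an index i with w′ ∈ S′_{2i} ∪ S′_{2i+1} and w ∈ S_{2i} ∪ S_{2i+1} (sets with index outside {1,…,m} being empty). Then det(I − AB) = ∑_{(n_1,…,n_m) ∈ ℕ^m} ( (−1)^{n_1+⋯+n_m} / (n_1! ⋯ n_m!)^2 ) ∑ det[A(w_a, w′_b)]_{a,b=1}^{|n|} · det[B(w′_a, w_b)]_{a,b=1}^{|n|}, where |n| = n_1+⋯+n_m, AB is the Σ×Σ matrix (AB)(w,ŵ) = ∑_{w′∈Σ′} A(w,w′)B(w′,ŵ), the inner sum is over all tuples (w_1,…,w_{|n|}) and (w′_1,…,w′_{|n|}) such that for each ℓ the entries with indices n_1+⋯+n_{ℓ−1}+1,…,n_1+⋯+n_ℓ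 lie in S_ℓ and S′_ℓ respectively, and all but finitely many terms of the outer sum vanish (the term indexed by n is zero whenever n_ℓ > |S_ℓ| for some ℓ, since the corresponding determinants have repeated rows). -/
open scoped BigOperators

/-- The term of index `nn = (n_1,…,n_m)` in the block Fredholm expansion:
`((−1)^{|nn|}/(nn!)²) ∑ det[A(w_a,w'_b)] det[B(w'_a,w_b)]`, the sum being over
all tuples with `n_ℓ` entries `w` in `S ℓ` and `n_ℓ` entries `w'` in `S' ℓ`
for each `ℓ`; both determinants are indexed by the sigma type
`(ℓ : Fin m) × Fin (nn ℓ)`, which lists the entries block by block. -/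
noncomputable def fredholmTerm {m : ℕ} (S S' : Fin m → Type)
    [∀ i, Fintype (S i)] [∀ i, DecidableEq (S i)]
    [∀ i, Fintype (S' i)] [∀ i, DecidableEq (S' i)]
    (A : ((i : Fin m) × S i) → ((i : Fin m) × S' i) → ℂ)
    (B : ((i : Fin m) × S' i) → ((i : Fin m) × S i) → ℂ)
    (nn : Fin m → ℕ) : ℂ :=
  ((-1 : ℂ) ^ (∑ i, nn i) / (∏ i, (Nat.factorial (nn i) : ℂ)) ^ 2) *
    ∑ ww : (ℓ : Fin m) → Fin (nn ℓ) → S ℓ, ∑ ww' : (ℓ : Fin m) → Fin (nn ℓ) → S' ℓ,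
      Matrix.det (Matrix.of fun a b : (ℓ : Fin m) × Fin (nn ℓ) =>
          A ⟨a.1, ww a.1 a.2⟩ ⟨b.1, ww' b.1 b.2⟩) *
        Matrix.det (Matrix.of fun a b : (ℓ : Fin m) × Fin (nn ℓ) =>
          B ⟨a.1, ww' a.1 a.2⟩ ⟨b.1, ww b.1 b.2⟩)

/-- A determinant `det (1 + M)` is the sum of all principal minors of `M`. -/
theorem Matrix.det_one_add_eq_sum_minors {n R : Type*} [Fintype n] [DecidableEq n] [CommRing R]
    (M : Matrix n n R) :
    (1 + M).det = ∑ s : Finset n, (M.submatrix (↑) (↑) : Matrix s s R).det := by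
  rw [add_comm]
  refine ((Matrix.detRowAlternating (n := n) (R := R)).map_add_univ M.row
    (1 : Matrix n n R).row).trans ?_
  exact Finset.sum_congr rfl fun s _ => Matrix.det_piecewise_one_eq_submatrix_det M s

theorem Matrix.det_fromBlocks_zero_diag {κ R : Type*} [Fintype κ] [DecidableEq κ] [CommRing R]
    (A B : Matrix κ κ R) :
    (Matrix.fromBlocks 0 A B 0).det = (-1) ^ Fintype.card κ * (A.det * B.det) := by
  have swap : (Matrix.fromBlocks 0 1 1 0 : Matrix (κ ⊕ κ) (κ ⊕ κ) R).det
      = (-1) ^ Fintype.card κ := by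
    have h : (Matrix.fromBlocks 1 1 0 1 * Matrix.fromBlocks 0 1 1 0 :
        Matrix (κ ⊕ κ) (κ ⊕ κ) R) = Matrix.fromBlocks 1 1 1 0 := by
      simp [Matrix.fromBlocks_multiply]
    have h' := congrArg Matrix.det h
    rwa [Matrix.det_mul, Matrix.det_fromBlocks_zero₂₁, Matrix.det_one, one_mul, one_mul,
      Matrix.det_fromBlocks_one₁₁, mul_one, zero_sub, Matrix.det_neg, Matrix.det_one,
      mul_one] at h'
  have h : Matrix.fromBlocks 0 A B 0 = Matrix.fromBlocks A 0 0 B * Matrix.fromBlocks 0 1 1 0 := by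
    simp [Matrix.fromBlocks_multiply]
  rw [h, Matrix.det_mul, swap, Matrix.det_fromBlocks_zero₂₁, mul_comm]

theorem Matrix.det_submatrix_of_image_eq {κ n R : Type*} [Fintype κ] [DecidableEq κ]
    [DecidableEq n] [CommRing R] (M : Matrix n n R) {f : κ → n} (hf : f.Injective)
    {s : Finset n} (hs : Finset.univ.image f = s) :
    (M.submatrix f f).det = (M.submatrix (↑) (↑) : Matrix s s R).det := by
  subst hs
  let e : κ ≃ (Finset.univ.image f : Finset n) :=
    Equiv.ofBijective (fun a => ⟨f a, Finset.mem_image_of_mem f (Finset.mem_univ a)⟩)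
      ⟨fun a b h => hf (congrArg Subtype.val h), fun ⟨y, hy⟩ => by
        obtain ⟨a, -, rfl⟩ := Finset.mem_image.mp hy
        exact ⟨a, rfl⟩⟩
  rw [← Matrix.det_submatrix_equiv_self e]
  rfl

theorem Matrix.det_submatrix_of_not_injective {κ n R : Type*} [Fintype κ] [DecidableEq κ]
    [CommRing R] (M : Matrix n n R) {f : κ → n} (hf : ¬ f.Injective) :
    (M.submatrix f f).det = 0 := by
  obtain ⟨a, b, hab, hne⟩ := Function.not_injective_iff.mp hf
  exact Matrix.det_zero_of_row_eq hne (by ext j; simp [hab])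

theorem Matrix.exists_perm_of_det_ne_zero {n R : Type*} [Fintype n] [DecidableEq n] [CommRing R]
    {M : Matrix n n R} (h : M.det ≠ 0) : ∃ σ : Equiv.Perm n, ∀ i, M (σ i) i ≠ 0 := by
  rw [Matrix.det_apply] at h
  obtain ⟨σ, -, hσ⟩ := Finset.exists_ne_zero_of_sum_ne_zero h
  refine ⟨σ, fun i hi => hσ ?_⟩
  rw [Finset.prod_eq_zero (f := fun j => M (σ j) j) (Finset.mem_univ i) hi, smul_zero]

/-- There are `n!` ways of listing a set of `n` elements. -/
theorem Fintype.card_filter_image_eq {α κ : Type*} [Fintype α] [DecidableEq α]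
    [Fintype κ] [DecidableEq κ] (T : Finset α) (hT : T.card = Fintype.card κ) :
    (Finset.univ.filter fun f : κ → α => Finset.univ.image f = T).card
      = (Fintype.card κ).factorial := by
  have e : κ ≃ T := Fintype.equivOfCardEq (by simp [hT])
  rw [← Fintype.card_equiv e, ← Finset.card_univ]
  symm
  refine Finset.card_bij (fun g _ a => (g a : α)) ?_ ?_ ?_
  · intro g _
    simp only [Finset.mem_filter, Finset.mem_univ, true_and]
    ext x
    simp only [Finset.mem_image, Finset.mem_univ, true_and]
    exact ⟨fun ⟨a, ha⟩ => ha ▸ (g a).2, fun hx => ⟨g.symm ⟨x, hx⟩, by simp⟩⟩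
  · intro g _ g' _ h
    ext a
    exact congrFun h a
  · intro f hf
    have hf' : Finset.univ.image f = T := (Finset.mem_filter.mp hf).2
    have hinj : f.Injective := by
      rw [← Set.injOn_univ, ← Finset.coe_univ, ← Finset.card_image_iff, hf', hT, Finset.card_univ]
    have hmem : ∀ a, f a ∈ T := fun a => hf' ▸ Finset.mem_image_of_mem f (Finset.mem_univ a)
    refine ⟨Equiv.ofBijective (fun a => ⟨f a, hmem a⟩)
      ((Fintype.bijective_iff_injective_and_card _).mpr
        ⟨fun a b h => hinj (congrArg Subtype.val h), by simp [hT]⟩), Finset.mem_univ _, rfl⟩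

/-- Families of subsets of the blocks of `Σ` and `Σ'` are the same as subsets of `Σ ⊕ Σ'`. -/
theorem bijective_disjSum_sigma {ι : Type*} [Fintype ι] {S S' : ι → Type*} :
    Function.Bijective fun P : (∀ i, Finset (S i)) × (∀ i, Finset (S' i)) =>
      (Finset.univ.sigma P.1).disjSum (Finset.univ.sigma P.2) := by
  classical
  constructor
  · rintro ⟨T, T'⟩ ⟨U, U'⟩ h
    simp only [Finset.ext_iff] at h
    refine Prod.ext ?_ ?_
    · ext i x
      simpa using h (Sum.inl ⟨i, x⟩)
    · ext i x
      simpa using h (Sum.inr ⟨i, x⟩)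
  · intro U
    refine ⟨⟨fun i => U.preimage (fun x => Sum.inl ⟨i, x⟩) ?_,
      fun i => U.preimage (fun x => Sum.inr ⟨i, x⟩) ?_⟩, ?_⟩
    · exact Function.Injective.injOn fun x y h => by simpa using h
    · exact Function.Injective.injOn fun x y h => by simpa using h
    · ext (⟨i, x⟩ | ⟨i, x⟩) <;> simp

/-- The principal minor of `[[0, A], [B, 0]]` on the union of the blocks `T i` and `T' i`. -/
noncomputable def crossMinor {ι : Type*} [Fintype ι] [DecidableEq ι] {S S' : ι → Type*}
    [∀ i, DecidableEq (S i)] [∀ i, DecidableEq (S' i)]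
    (A : ((i : ι) × S i) → ((i : ι) × S' i) → ℂ)
    (B : ((i : ι) × S' i) → ((i : ι) × S i) → ℂ)
    (T : ∀ i, Finset (S i)) (T' : ∀ i, Finset (S' i)) : ℂ :=
  ((Matrix.fromBlocks 0 (Matrix.of A) (Matrix.of B) 0).submatrix (↑) (↑) :
    Matrix ((Finset.univ.sigma T).disjSum (Finset.univ.sigma T'))
      ((Finset.univ.sigma T).disjSum (Finset.univ.sigma T')) ℂ).det

theorem det_one_sub_mul_eq_sum_crossMinor {ι : Type*} [Fintype ι] [DecidableEq ι]
    {S S' : ι → Type*} [∀ i, Fintype (S i)] [∀ i, DecidableEq (S i)]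
    [∀ i, Fintype (S' i)] [∀ i, DecidableEq (S' i)]
    (A : ((i : ι) × S i) → ((i : ι) × S' i) → ℂ)
    (B : ((i : ι) × S' i) → ((i : ι) × S i) → ℂ) :
    (1 - Matrix.of A * Matrix.of B).det = ∑ T, ∑ T', crossMinor A B T T' := by
  have h : Matrix.fromBlocks 1 (Matrix.of A) (Matrix.of B) 1
      = 1 + Matrix.fromBlocks 0 (Matrix.of A) (Matrix.of B) 0 := by
    rw [← Matrix.fromBlocks_one, Matrix.fromBlocks_add]
    simp
  rw [← Matrix.det_fromBlocks_one₂₂, h, Matrix.det_one_add_eq_sum_minors,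
    ← bijective_disjSum_sigma.sum_comp, Fintype.sum_prod_type]
  rfl

/-- A nonzero principal minor of `[[0, A], [B, 0]]` gives a permutation of `T ⊔ T'` exchanging the
two parts; if `A` or `B` respects the grading `c`, then `T` and `T'` have equally many elements of
each degree. -/
theorem sum_card_eq_of_crossMinor_ne_zero {ι : Type*} [Fintype ι] [DecidableEq ι]
    {S S' : ι → Type*} [∀ i, DecidableEq (S i)] [∀ i, DecidableEq (S' i)]
    {A : ((i : ι) × S i) → ((i : ι) × S' i) → ℂ}
    {B : ((i : ι) × S' i) → ((i : ι) × S i) → ℂ}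
    {T : ∀ i, Finset (S i)} {T' : ∀ i, Finset (S' i)} (h : crossMinor A B T T' ≠ 0)
    (c : ι → ℕ)
    (hc : (∀ x y, c x.1 ≠ c y.1 → A x y = 0) ∨ (∀ y x, c y.1 ≠ c x.1 → B y x = 0)) (k : ℕ) :
    ∑ i with c i = k, (T i).card = ∑ i with c i = k, (T' i).card := by
  obtain ⟨σ, hσ⟩ := Matrix.exists_perm_of_det_ne_zero h
  simp only [Matrix.submatrix_apply] at hσ
  let p : ((i : ι) × S i) ⊕ ((i : ι) × S' i) → ℕ :=
    Sum.elim (fun x => if c x.1 = k then 1 else 0) fun _ => 0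
  let q : ((i : ι) × S i) ⊕ ((i : ι) × S' i) → ℕ :=
    Sum.elim (fun _ => 0) fun y => if c y.1 = k then 1 else 0
  have key : ∑ u ∈ (Finset.univ.sigma T).disjSum (Finset.univ.sigma T'), p u
      = ∑ u ∈ (Finset.univ.sigma T).disjSum (Finset.univ.sigma T'), q u := by
    rw [← Finset.sum_coe_sort, ← Finset.sum_coe_sort _ q]
    rcases hc with hc | hc
    · rw [← Equiv.sum_comp σ]
      refine Finset.sum_congr rfl fun u _ => ?_
      have := hσ u
      revert this
      generalize (σ u : ((i : ι) × S i) ⊕ ((i : ι) × S' i)) = v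
      generalize (u : ((i : ι) × S i) ⊕ ((i : ι) × S' i)) = w
      rcases v with x | y <;> rcases w with x' | y' <;> intro this
      · simp at this
      · have hxy : c x.1 = c y'.1 := by
          by_contra hne
          exact this (hc _ _ hne)
        simp [p, q, hxy]
      · simp [p, q]
      · simp at this
    · rw [← Equiv.sum_comp σ fun u => q u]
      refine Finset.sum_congr rfl fun u _ => ?_
      have := hσ u
      revert this
      generalize (σ u : ((i : ι) × S i) ⊕ ((i : ι) × S' i)) = v
      generalize (u : ((i : ι) × S i) ⊕ ((i : ι) × S' i)) = w
      rcases v with x | y <;> rcases w with x' | y' <;> intro this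
      · simp at this
      · simp [p, q]
      · have hxy : c y.1 = c x'.1 := by
          by_contra hne
          exact this (hc _ _ hne)
        simp [p, q, hxy]
      · simp at this
  rw [Finset.sum_disjSum, Finset.sum_disjSum, Finset.sum_sigma, Finset.sum_sigma,
    Finset.sum_sigma, Finset.sum_sigma] at key
  have hp : ∀ i, ∑ s ∈ T i, p (Sum.inl ⟨i, s⟩) = if c i = k then (T i).card else 0 := fun i => by
    by_cases hi : c i = k <;> simp [p, hi]
  have hq : ∀ i, ∑ s ∈ T' i, q (Sum.inr ⟨i, s⟩) = if c i = k then (T' i).card else 0 :=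
    fun i => by by_cases hi : c i = k <;> simp [q, hi]
  have hp' : ∀ i, ∑ s ∈ T' i, p (Sum.inr ⟨i, s⟩) = 0 := fun i => by simp [p]
  have hq' : ∀ i, ∑ s ∈ T i, q (Sum.inl ⟨i, s⟩) = 0 := fun i => by simp [q]
  simp only [hp, hq, hp', hq', Finset.sum_const_zero, add_zero, zero_add] at key
  rwa [Finset.sum_filter, Finset.sum_filter]

/-- Two sequences with equal sums over the pairs `{2i, 2i+1}` and over the pairs `{2i-1, 2i}`
coincide. -/
theorem eq_of_sum_pairs_eq {m : ℕ} {t t' : Fin m → ℕ}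
    (h : ∀ k, ∑ i ∈ Finset.univ.filter (fun i : Fin m => (i : ℕ) / 2 = k), t i
      = ∑ i ∈ Finset.univ.filter (fun i : Fin m => (i : ℕ) / 2 = k), t' i)
    (h' : ∀ k, ∑ i ∈ Finset.univ.filter (fun i : Fin m => ((i : ℕ) + 1) / 2 = k), t i
      = ∑ i ∈ Finset.univ.filter (fun i : Fin m => ((i : ℕ) + 1) / 2 = k), t' i) :
    t = t' := by
  funext i
  induction i using WellFoundedLT.induction with
  | ind i ih =>
    have cancel : ∀ F : Finset (Fin m), i ∈ F → (∀ j ∈ F, j ≤ i) →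
        ∑ j ∈ F, t j = ∑ j ∈ F, t' j → t i = t' i := by
      intro F hi hF hs
      rw [← Finset.add_sum_erase F t hi, ← Finset.add_sum_erase F t' hi,
        Finset.sum_congr rfl fun j hj => ih j (lt_of_le_of_ne
          (hF j (Finset.mem_of_mem_erase hj)) (Finset.ne_of_mem_erase hj))] at hs
      exact Nat.add_right_cancel hs
    rcases Nat.even_or_odd' (i : ℕ) with ⟨r, hr | hr⟩
    · refine cancel _ ?_ ?_ (h' (((i : ℕ) + 1) / 2))
      · simp
      · intro j hj
        have := (Finset.mem_filter.mp hj).2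
        rw [Fin.le_def]
        omega
    · refine cancel _ ?_ ?_ (h ((i : ℕ) / 2))
      · simp
      · intro j hj
        have := (Finset.mem_filter.mp hj).2
        rw [Fin.le_def]
        omega

/-- The number of ways of listing each member of a family of finite sets. -/
theorem card_filter_forall_image_eq {ι : Type*} [Fintype ι] [DecidableEq ι] {S : ι → Type*}
    [∀ i, Fintype (S i)] [∀ i, DecidableEq (S i)] (T : ∀ i, Finset (S i)) :
    (Finset.univ.filter fun ww : ∀ i, Fin (T i).card → S i =>
      (fun i => Finset.univ.image (ww i)) = T).card = ∏ i, ((T i).card).factorial := by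
  have h : (Finset.univ.filter fun ww : ∀ i, Fin (T i).card → S i =>
      (fun i => Finset.univ.image (ww i)) = T)
      = Fintype.piFinset fun i => Finset.univ.filter fun f : Fin (T i).card → S i =>
        Finset.univ.image f = T i := by
    ext ww
    simp [funext_iff]
  rw [h, Fintype.card_piFinset]
  refine Finset.prod_congr rfl fun i _ => ?_
  rw [Fintype.card_filter_image_eq (T i) (by simp), Fintype.card_fin]

theorem card_image_univ_eq_iff_injective {α : Type*} [DecidableEq α] {k : ℕ} (f : Fin k → α) :
    (Finset.univ.image f).card = k ↔ f.Injective := by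
  rw [← Set.injOn_univ, ← Finset.coe_univ, ← Finset.card_image_iff, Finset.card_fin]

theorem sigma_map_id_injective_iff {ι : Type*} {K S : ι → Type*} (ww : ∀ i, K i → S i) :
    (Sigma.map id ww).Injective ↔ ∀ i, (ww i).Injective :=
  ⟨fun h i x y hxy => by
    have : (⟨i, x⟩ : Sigma K) = ⟨i, y⟩ := h (by simp [Sigma.map, hxy])
    simpa using this, fun h => Function.injective_id.sigma_map h⟩

/-- The minor of `[[0, A], [B, 0]]` along block-wise listings of `T` and `T'` is `crossMinor`
for listings without repetitions, and vanishes otherwise. -/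
theorem det_fromBlocks_submatrix_listing {ι : Type*} [Fintype ι] [DecidableEq ι]
    {S S' : ι → Type*} [∀ i, DecidableEq (S i)] [∀ i, DecidableEq (S' i)]
    (A : ((i : ι) × S i) → ((i : ι) × S' i) → ℂ)
    (B : ((i : ι) × S' i) → ((i : ι) × S i) → ℂ) {n : ι → ℕ}
    (ww : ∀ i, Fin (n i) → S i) (ww' : ∀ i, Fin (n i) → S' i)
    {T : ∀ i, Finset (S i)} {T' : ∀ i, Finset (S' i)}
    (hT : (fun i => Finset.univ.image (ww i)) = T)
    (hT' : (fun i => Finset.univ.image (ww' i)) = T') :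
    ((Matrix.fromBlocks 0 (Matrix.of A) (Matrix.of B) 0).submatrix
      (Sum.map (Sigma.map id ww) (Sigma.map id ww'))
      (Sum.map (Sigma.map id ww) (Sigma.map id ww'))).det =
    if (fun i => (T i).card) = n ∧ (fun i => (T' i).card) = n then crossMinor A B T T' else 0 := by
  subst hT hT'
  simp only [funext_iff, card_image_univ_eq_iff_injective, ← sigma_map_id_injective_iff,
    ← Sum.map_injective]
  split_ifs with h
  · refine Matrix.det_submatrix_of_image_eq _ h ?_
    ext (⟨i, x⟩ | ⟨i, x⟩) <;> simp [Sigma.map]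
  · exact Matrix.det_submatrix_of_not_injective _ h

theorem fredholmTerm_eq_sum_crossMinor {m : ℕ} (S S' : Fin m → Type)
    [∀ i, Fintype (S i)] [∀ i, DecidableEq (S i)]
    [∀ i, Fintype (S' i)] [∀ i, DecidableEq (S' i)]
    (A : ((i : Fin m) × S i) → ((i : Fin m) × S' i) → ℂ)
    (B : ((i : Fin m) × S' i) → ((i : Fin m) × S i) → ℂ) (n : Fin m → ℕ) :
    fredholmTerm S S' A B n = ∑ T, ∑ T',
      if (fun i => (T i).card) = n ∧ (fun i => (T' i).card) = n then
        crossMinor A B T T' else 0 := by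
  have term : ∀ (ww : ∀ i, Fin (n i) → S i) (ww' : ∀ i, Fin (n i) → S' i),
      (-1 : ℂ) ^ (∑ i, n i) * (Matrix.det (Matrix.of fun a b : (ℓ : Fin m) × Fin (n ℓ) =>
          A ⟨a.1, ww a.1 a.2⟩ ⟨b.1, ww' b.1 b.2⟩) *
        Matrix.det (Matrix.of fun a b : (ℓ : Fin m) × Fin (n ℓ) =>
          B ⟨a.1, ww' a.1 a.2⟩ ⟨b.1, ww b.1 b.2⟩)) =
      ((Matrix.fromBlocks 0 (Matrix.of A) (Matrix.of B) 0).submatrix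
        (Sum.map (Sigma.map id ww) (Sigma.map id ww'))
        (Sum.map (Sigma.map id ww) (Sigma.map id ww'))).det := by
    intro ww ww'
    have hcard : ∑ i, n i = Fintype.card ((ℓ : Fin m) × Fin (n ℓ)) := by simp
    rw [hcard, ← Matrix.det_fromBlocks_zero_diag]
    congr 1
    ext (a | a) (b | b) <;> rfl
  have fact : (∏ i, ((n i).factorial : ℂ)) ≠ 0 :=
    Finset.prod_ne_zero_iff.mpr fun i _ => Nat.cast_ne_zero.mpr (Nat.factorial_ne_zero _)
  unfold fredholmTerm
  rw [div_mul_eq_mul_div, div_eq_iff (pow_ne_zero 2 fact), Finset.mul_sum]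
  simp_rw [Finset.mul_sum, term]
  rw [← Finset.sum_fiberwise Finset.univ fun (ww : ∀ i, Fin (n i) → S i) i =>
    Finset.univ.image (ww i), Finset.sum_mul]
  refine Finset.sum_congr rfl fun T _ => ?_
  rw [Finset.sum_comm, ← Finset.sum_fiberwise Finset.univ fun (ww' : ∀ i, Fin (n i) → S' i) i =>
    Finset.univ.image (ww' i), Finset.sum_mul]
  refine Finset.sum_congr rfl fun T' _ => ?_
  rw [Finset.sum_congr rfl fun ww' hww' => Finset.sum_congr rfl fun ww hww =>
    det_fromBlocks_submatrix_listing A B ww ww' (Finset.mem_filter.mp hww).2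
      (Finset.mem_filter.mp hww').2]
  simp only [Finset.sum_const]
  split_ifs with h
  · obtain ⟨h, h'⟩ := h
    have c1 : (Finset.univ.filter fun ww : ∀ i, Fin (n i) → S i =>
      (fun i => Finset.univ.image (ww i)) = T).card = ∏ i, (n i).factorial := by
      subst h
      exact card_filter_forall_image_eq T
    have c2 : (Finset.univ.filter fun ww : ∀ i, Fin (n i) → S' i =>
      (fun i => Finset.univ.image (ww i)) = T').card = ∏ i, (n i).factorial := by
      subst h'
      exact card_filter_forall_image_eq T'
    rw [c1, c2]
    simp only [nsmul_eq_mul, Nat.cast_prod]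
    ring
  · simp

/-- Block Fredholm expansion (Lemma: aux2). `Σ` is the disjoint union of the
finite sets `S_1,…,S_m` (modeled by the sigma type of `S : Fin m → Type`), and
similarly for `Σ'`; indices are 0-based, so the 1-based index of the block of
`x : Σ` is `x.1.val + 1`. The block hypothesis for `A` says `A(w,w') = 0`
unless the 1-based block indices `p, q` of `w, w'` satisfy
`⌈p/2⌉ = ⌈q/2⌉` (i.e. both lie in `{2i−1, 2i}` for some `i`), which in 0-based
terms reads `x.1.val / 2 = y.1.val / 2`; the hypothesis for `B` says
`B(w',w) = 0` unless `⌊p/2⌋ = ⌊q/2⌋` (i.e. both lie in `{2i, 2i+1}` for some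
`i`, sets with out-of-range index being empty), i.e.
`(y.1.val + 1)/2 = (x.1.val + 1)/2`. -/
theorem fredholm_block_expansion
    (m : ℕ) (hm : 1 ≤ m) (S S' : Fin m → Type)
    [∀ i, Fintype (S i)] [∀ i, DecidableEq (S i)]
    [∀ i, Fintype (S' i)] [∀ i, DecidableEq (S' i)]
    (A : ((i : Fin m) × S i) → ((i : Fin m) × S' i) → ℂ)
    (B : ((i : Fin m) × S' i) → ((i : Fin m) × S i) → ℂ)
    (hA : ∀ x y, (x.1 : ℕ) / 2 ≠ (y.1 : ℕ) / 2 → A x y = 0)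
    (hB : ∀ y x, ((y.1 : ℕ) + 1) / 2 ≠ ((x.1 : ℕ) + 1) / 2 → B y x = 0) :
    (Function.support (fredholmTerm S S' A B)).Finite ∧
    Matrix.det
        (1 - Matrix.of fun x x' : (i : Fin m) × S i =>
          ∑ y : (i : Fin m) × S' i, A x y * B y x') =
      ∑' nn : Fin m → ℕ, fredholmTerm S S' A B nn := by
  have hzero : ∀ n, n ∉ Fintype.piFinset (fun i => Finset.range (Fintype.card (S i) + 1)) →
      fredholmTerm S S' A B n = 0 := by
    intro n hn
    rw [fredholmTerm_eq_sum_crossMinor]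
    refine Finset.sum_eq_zero fun T _ => Finset.sum_eq_zero fun T' _ => if_neg ?_
    rintro ⟨rfl, -⟩
    exact hn (by simp [Fintype.mem_piFinset, Finset.card_le_univ])
  refine ⟨(Finset.finite_toSet _).subset fun n hn => by_contra fun h => hn (hzero n h), ?_⟩
  rw [tsum_eq_sum (f := fredholmTerm S S' A B) hzero]
  refine (det_one_sub_mul_eq_sum_crossMinor A B).trans ?_
  simp_rw [fredholmTerm_eq_sum_crossMinor]
  refine Eq.trans ?_ Finset.sum_comm
  refine Finset.sum_congr rfl fun T _ => ?_
  refine Eq.trans ?_ Finset.sum_comm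
  refine Finset.sum_congr rfl fun T' _ => ?_
  rw [Finset.sum_eq_single_of_mem (fun i => (T i).card)
    (by simp [Fintype.mem_piFinset, Finset.card_le_univ])
    fun n _ hn => if_neg fun h => hn h.1.symm]
  by_cases h : crossMinor A B T T' = 0
  · simp [h]
  · exact (if_pos ⟨rfl, (eq_of_sum_pairs_eq
      (sum_card_eq_of_crossMinor_ne_zero h (fun i => (i : ℕ) / 2) (Or.inl hA))
      (sum_card_eq_of_crossMinor_ne_zero h (fun i => ((i : ℕ) + 1) / 2) (Or.inr hB))).symm⟩).symm
end
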